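/- arXiv:1212.0216 — 4 statements merged into one kernel-verified Lean document; each statement's English description precedes it below -/
import Mathlib

section
/- Let Y ⊆ X be a compact A-minimal subset, α a root, and Y_α ⊆ Y an A_α-minimal subset with A·Y_α = Y. Then every A_α-minimal subset Y' ⊆ Y is of the form Y' = a·Y_α for some a ∈ A; in particular, A·Y' = Y. -/
/-! Elements of `A` commute with `A_α`, so a translate `a • Y_α` with `a ∈ A` is again
`A_α`-minimal and compact. Since `A • Y_α = Y`, a point `z ∈ Y'` has the form `a • y` with
`y ∈ Y_α`; then `a • Y_α` and `Y'` both equal the closure of the `A_α`-orbit of `z`. This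
needs compact subsets of `G ⧸ Γ` to be closed, i.e. `G ⧸ Γ` Hausdorff (`t2Space_quot`), which
holds because `Γ` is closed: it consists of the elements of `G` with integer entries
(`isClosed_GammaZ`). The equality `A • Y' = Y` then follows because `A` is closed under
multiplication and inversion. -/

open Matrix MeasureTheory Pointwise

/-- `G = SL_n(ℝ)`. -/
abbrev SLR (n : ℕ) := Matrix.SpecialLinearGroup (Fin n) ℝ

/-- The standard topology on `SL_n(ℝ)`, as a subspace of the matrices. -/
instance (n : ℕ) : TopologicalSpace (SLR n) :=
  inferInstanceAs (TopologicalSpace {A : Matrix (Fin n) (Fin n) ℝ // A.det = 1})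

/-- `Γ = SL_n(ℤ)`, viewed as a subgroup of `SL_n(ℝ)`. -/
def GammaZ (n : ℕ) : Subgroup (SLR n) :=
  (Matrix.SpecialLinearGroup.map (n := Fin n) (Int.castRingHom ℝ)).range

/-- `A`: the set of diagonal matrices in `SL_n(ℝ)` with positive diagonal entries. -/
def posDiag (n : ℕ) : Set (SLR n) :=
  {g | (∀ i j, i ≠ j → g.1 i j = 0) ∧ (∀ i, 0 < g.1 i i)}

/-- `A_α`: the kernel of the root `α = α_{ij}`, `α(a) = a_{ii}/a_{jj}`, i.e. the set of
`a ∈ A` with `a_{ii} = a_{jj}`. -/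
def rootKer (n : ℕ) (i j : Fin n) : Set (SLR n) :=
  {g | g ∈ posDiag n ∧ g.1 i i = g.1 j j}

/-- `u_α(s) = I + s E_{ij}`, an element of the root group `U_α`. -/
noncomputable def elemU (n : ℕ) {i j : Fin n} (hij : i ≠ j) (s : ℝ) : SLR n :=
  ⟨Matrix.transvection i j s, Matrix.det_transvection_of_ne i j hij s⟩

/-- A nonempty subset `Z` is `S`-minimal if it is invariant under each element of `S`
and every `S`-orbit of a point of `Z` is dense in `Z`. -/
def IsMinimalOn {G X : Type*} [SMul G X] [TopologicalSpace X] (S : Set G) (Z : Set X) : Prop :=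
  Z.Nonempty ∧ (∀ g ∈ S, (g • ·) '' Z = Z) ∧ ∀ z ∈ Z, Z ⊆ closure ((· • z) '' S)

/-- `Γ` is a lattice in `G`: a discrete subgroup such that `G/Γ` carries a (nonzero)
finite `G`-invariant Borel measure. -/
def IsLattice {G : Type*} [Group G] [TopologicalSpace G] (Γ : Subgroup G) : Prop :=
  DiscreteTopology Γ ∧
    ∃ μ : @Measure (G ⧸ Γ) (borel _),
      μ Set.univ ≠ 0 ∧ μ Set.univ ≠ ⊤ ∧
      ∀ (g : G) (s : Set (G ⧸ Γ)), μ ((g • ·) ⁻¹' s) = μ s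

/-- Mathlib proves this for its own topology on the special linear group, which is definitionally
the subspace topology used here. -/
theorem isTopologicalGroup_SLR (n : ℕ) : IsTopologicalGroup (SLR n) :=
  Matrix.SpecialLinearGroup.topologicalGroup

/-- A real matrix of determinant one with integer entries lies in the image of `SL_n(ℤ)`, since its
integer lift also has determinant one. -/
theorem mem_GammaZ_iff {n : ℕ} (g : SLR n) :
    g ∈ GammaZ n ↔ ∀ i j, g.1 i j ∈ Set.range ((↑) : ℤ → ℝ) := by
  constructor
  · rintro ⟨h, rfl⟩ i j
    exact ⟨h.1 i j, rfl⟩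
  · intro h
    choose m hm using h
    have hmap : (Int.castRingHom ℝ).mapMatrix (Matrix.of m) = g.1 := by
      ext i j
      exact hm i j
    have hdet : (Matrix.of m).det = 1 := by
      have h1 : (Int.castRingHom ℝ) (Matrix.of m).det = 1 := by
        rw [RingHom.map_det, hmap, g.2]
      rw [eq_intCast] at h1
      exact_mod_cast h1
    exact ⟨⟨Matrix.of m, hdet⟩, Subtype.ext hmap⟩

theorem isClosed_GammaZ (n : ℕ) : IsClosed (GammaZ n : Set (SLR n)) := by
  have hset : (GammaZ n : Set (SLR n)) =
      ⋂ i, ⋂ j, {g : SLR n | g.1 i j ∈ Set.range ((↑) : ℤ → ℝ)} := by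
    ext g
    simp only [SetLike.mem_coe, mem_GammaZ_iff, Set.mem_iInter, Set.mem_ofPred_eq]
  rw [hset]
  refine isClosed_iInter fun i => isClosed_iInter fun j => ?_
  have hc : Continuous fun g : SLR n => g.1 i j :=
    (continuous_subtype_val : Continuous
      (Subtype.val : {A : Matrix (Fin n) (Fin n) ℝ // A.det = 1} → _)).matrix_elem i j
  exact Int.isClosedEmbedding_coe_real.isClosed_range.preimage hc

theorem t2Space_quot (n : ℕ) : T2Space (SLR n ⧸ GammaZ n) := by
  have := isTopologicalGroup_SLR n
  have := isClosed_GammaZ n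
  infer_instance

theorem posDiag_eq_diagonal {n : ℕ} {g : SLR n} (hg : g ∈ posDiag n) :
    g.1 = Matrix.diagonal fun i => g.1 i i := by
  ext i j
  by_cases h : i = j
  · subst h; simp
  · rw [Matrix.diagonal_apply_ne _ h, hg.1 i j h]

theorem posDiag_comm {n : ℕ} {g h : SLR n} (hg : g ∈ posDiag n) (hh : h ∈ posDiag n) :
    g * h = h * g := by
  apply Subtype.ext
  change g.1 * h.1 = h.1 * g.1
  rw [posDiag_eq_diagonal hg, posDiag_eq_diagonal hh, Matrix.diagonal_mul_diagonal,
    Matrix.diagonal_mul_diagonal]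
  simp only [mul_comm]

theorem mem_posDiag_of_diagonal {n : ℕ} {g : SLR n} (d : Fin n → ℝ) (hd : ∀ i, 0 < d i)
    (hg : g.1 = Matrix.diagonal d) : g ∈ posDiag n := by
  refine ⟨fun i j h => ?_, fun i => ?_⟩
  · rw [hg, Matrix.diagonal_apply_ne _ h]
  · rw [hg, Matrix.diagonal_apply_eq]
    exact hd i

theorem posDiag_mul {n : ℕ} {g h : SLR n} (hg : g ∈ posDiag n) (hh : h ∈ posDiag n) :
    g * h ∈ posDiag n := by
  refine mem_posDiag_of_diagonal (fun i => g.1 i i * h.1 i i)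
    (fun i => mul_pos (hg.2 i) (hh.2 i)) ?_
  change g.1 * h.1 = _
  conv_lhs => rw [posDiag_eq_diagonal hg, posDiag_eq_diagonal hh]
  rw [Matrix.diagonal_mul_diagonal]

theorem posDiag_inv {n : ℕ} {g : SLR n} (hg : g ∈ posDiag n) : g⁻¹ ∈ posDiag n := by
  refine mem_posDiag_of_diagonal (fun i => ∏ j ∈ Finset.univ.erase i, g.1 j j)
    (fun i => Finset.prod_pos fun j _ => hg.2 j) ?_
  -- The inverse in `SpecialLinearGroup` is by definition the adjugate.
  change g.1.adjugate = _
  conv_lhs => rw [posDiag_eq_diagonal hg]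
  rw [Matrix.adjugate_diagonal]

/-- If `Y_α ⊆ Y` is an `A_α`-minimal subset of a compact `A`-minimal set `Y` with
`A•Y_α = Y`, then every `A_α`-minimal subset `Y' ⊆ Y` is a translate `a•Y_α` for some
`a ∈ A`; in particular `A•Y' = Y`. -/
theorem statement_4 (n : ℕ) (hn : 3 ≤ n) (i j : Fin n) (hij : i ≠ j)
    (Y : Set (SLR n ⧸ GammaZ n)) (hYc : IsCompact Y) (hYmin : IsMinimalOn (posDiag n) Y)
    (Yα : Set (SLR n ⧸ GammaZ n)) (hsub : Yα ⊆ Y) (hYαc : IsCompact Yα)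
    (hYαmin : IsMinimalOn (rootKer n i j) Yα) (hAY : posDiag n • Yα = Y)
    (Y' : Set (SLR n ⧸ GammaZ n)) (hsub' : Y' ⊆ Y) (hY'c : IsCompact Y')
    (hY'min : IsMinimalOn (rootKer n i j) Y') :
    (∃ a ∈ posDiag n, Y' = (a • ·) '' Yα) ∧ posDiag n • Y' = Y := by
  have := isTopologicalGroup_SLR n
  have := t2Space_quot n
  obtain ⟨z, hz⟩ := hY'min.1
  obtain ⟨a, ha, y, hy, hay⟩ := Set.mem_smul.1 (hAY ▸ hsub' hz)
  have hcont : Continuous fun x : SLR n ⧸ GammaZ n => a • x := continuous_const_smul a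
  have hcomm : ∀ h ∈ rootKer n i j, h • z = a • h • y := fun h hh => by
    rw [← hay, smul_smul, smul_smul, posDiag_comm hh.1 ha]
  have heq : Y' = (a • ·) '' Yα := by
    apply Set.Subset.antisymm
    · refine (hY'min.2.2 z hz).trans
        (closure_minimal ?_ (hYαc.image hcont).isClosed)
      rintro _ ⟨h, hh, rfl⟩
      exact ⟨h • y, hYαmin.2.1 h hh ▸ Set.mem_image_of_mem _ hy, (hcomm h hh).symm⟩
    · refine (Set.image_mono (hYαmin.2.2 y hy)).trans
        ((image_closure_subset_closure_image hcont).trans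
          (closure_minimal ?_ hY'c.isClosed))
      rintro _ ⟨_, ⟨h, hh, rfl⟩, rfl⟩
      change a • h • y ∈ Y'
      rw [← hcomm h hh, ← hY'min.2.1 h hh]
      exact Set.mem_image_of_mem _ hz
  refine ⟨⟨a, ha, heq⟩, ?_⟩
  rw [← hAY, heq]
  ext x
  simp only [Set.mem_smul]
  constructor
  · rintro ⟨b, hb, _, ⟨w, hw, rfl⟩, rfl⟩
    exact ⟨b * a, posDiag_mul hb ha, w, hw, mul_smul b a w⟩
  · rintro ⟨b, hb, w, hw, rfl⟩
    refine ⟨b * a⁻¹, posDiag_mul hb (posDiag_inv ha), a • w, ⟨w, hw, rfl⟩, ?_⟩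
    rw [smul_smul, inv_mul_cancel_right]
end

section
/- Let Y ⊆ X be a compact A-minimal subset, and suppose that for every root α, every A_α-minimal subset Y_α ⊆ Y satisfies A·Y_α = Y. Then Y is a single compact A-orbit. -/
/-!
Write `u_α(s)` for the elements of the root group of `α`. The proof has two halves.

*A nonzero displacement along a root group inside `Y` is impossible* (`unip_trivial`). Let
`z, u_α(s) z ∈ Y` with `s ≠ 0`. By Zorn and the hypothesis, `z` lies in an `A_α`-minimal set
`M ⊆ Y` whose `A`-translates cover `Y`. These translates are pairwise equal or disjoint, and
`A / A_α` is a line, so the Baire category theorem and the minimality of `Y` show that finitely many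
compact pieces of this family of translates cover `Y`; hence some `d ∈ A` with `α(d) < 1` satisfies
`d M = M` (`exists_return`). Contracting by powers of `d` shows that `u_α(s) z` lies in the same
translate, namely `M`. Since `A_α` commutes with the root group, `u_α(s)` preserves `M`; conjugating
by `d` gives arbitrarily small such `s`, so `M` is invariant under the whole root group
(`unip_inv_all`). On the other hand, for `g Γ` in a compact `A`-invariant set no entry of `g` vanishes
(`entry_ne_zero`): otherwise `A` would shrink a column of `g`, a nonzero vector of the lattice
`g ℤⁿ`, to zero. But left multiplication by a suitable `u_α(r)` makes an entry of `g` vanish.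

*If `Y` is not a single orbit, such a displacement exists.* Fix `y ∈ Y`. If all small `g` with
`g y ∈ Y` are diagonal, then `A y` is open in `Y`, and minimality gives `Y = A y` (`eq_orbit`).
Otherwise there are arbitrarily small `g` with `g y ∈ Y` and a nonzero entry above the diagonal (or,
symmetrically, below it). Conjugating by elements of `A` that expand these entries to size one and
passing to a limit gives `z, h z ∈ Y` with `h ≠ 1` in a horospherical subgroup
(`exists_horospherical`). A further contraction that fixes one extremal root occurring in `h` and
contracts all the others isolates a single root group (`exists_root`).
-/


open Matrix MeasureTheory Pointwise

/-! ### Topology of `SL_n(ℝ)` and of the quotient -/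

namespace CompactOrbit

open Filter Topology

/-- The group structure is compatible with the topology of `SL_n(ℝ)`. The topology fixed above
agrees definitionally with Mathlib's, so Mathlib's instance applies. -/
instance instTopGroup (n : ℕ) : IsTopologicalGroup (SLR n) :=
  Matrix.SpecialLinearGroup.topologicalGroup

/-- The space `X = SL_n(ℝ) / SL_n(ℤ)`. -/
abbrev Quo (n : ℕ) := SLR n ⧸ GammaZ n

variable {n : ℕ}

theorem isClosedEmbedding_coe :
    IsClosedEmbedding (fun g : SLR n => (g.1 : Matrix (Fin n) (Fin n) ℝ)) :=
  Topology.IsClosedEmbedding.subtypeVal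
    (isClosed_singleton.preimage (Continuous.matrix_det continuous_id))

theorem continuous_entry (p q : Fin n) : Continuous fun g : SLR n => g.1 p q :=
  isClosedEmbedding_coe.continuous.matrix_elem p q

theorem tendsto_of_entries {ι : Type*} {l : Filter ι} {f : ι → SLR n} {g : SLR n}
    (h : ∀ p q, Tendsto (fun k => (f k).1 p q) l (𝓝 (g.1 p q))) : Tendsto f l (𝓝 g) := by
  rw [isClosedEmbedding_coe.isEmbedding.tendsto_nhds_iff]
  exact tendsto_pi_nhds.2 fun p => tendsto_pi_nhds.2 fun q => h p q

theorem isCompact_box (C : ℝ) : IsCompact {g : SLR n | ∀ p q, |g.1 p q| ≤ C} := by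
  have hK : IsCompact (Set.univ.pi fun _ : Fin n => Set.univ.pi fun _ : Fin n => Set.Icc (-C) C) :=
    isCompact_univ_pi fun _ => isCompact_univ_pi fun _ => isCompact_Icc
  have := (isClosedEmbedding_coe (n := n)).isCompact_preimage hK
  convert this using 1
  ext g
  exact ⟨fun h p _ q _ => abs_le.1 (h p q), fun h p q => abs_le.2 (h p trivial q trivial)⟩

/-- A real matrix of determinant one lies in `SL_n(ℤ)` as soon as its entries are integers, which
is a closed condition. -/
theorem isClosed_GammaZ : IsClosed (GammaZ n : Set (SLR n)) := by
  have : (GammaZ n : Set (SLR n)) =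
      ⋂ p, ⋂ q, (fun g : SLR n => g.1 p q) ⁻¹' Set.range ((↑) : ℤ → ℝ) := by
    ext g
    simp only [Set.mem_iInter, Set.mem_preimage, Set.mem_range, SetLike.mem_coe]
    constructor
    · rintro ⟨m, rfl⟩ p q
      exact ⟨m.1 p q, rfl⟩
    · intro h
      choose m hm using h
      have hmap : (Matrix.of m).map (Int.castRingHom ℝ) = g.1 := by
        ext p q; simp [hm]
      have hdet : (Matrix.of m).det = 1 := by
        have h1 := RingHom.map_det (Int.castRingHom ℝ) (Matrix.of m)
        rw [RingHom.mapMatrix_apply, hmap, g.2] at h1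
        simpa using h1
      exact ⟨⟨Matrix.of m, hdet⟩, Subtype.ext hmap⟩
  rw [this]
  exact isClosed_iInter fun p => isClosed_iInter fun q =>
    Int.isClosedEmbedding_coe_real.isClosed_range.preimage (continuous_entry p q)

/-- Mathlib's separation instance for `G ⧸ N` asks that `N` be normal; closedness of `N` is
enough for the Hausdorff property. -/
instance instT2Quo : T2Space (Quo n) := by
  rw [t2Space_iff_of_isOpenQuotientMap (QuotientGroup.isOpenQuotientMap_mk (N := GammaZ n))]
  have : {q : SLR n × SLR n | (QuotientGroup.mk q.1 : Quo n) = QuotientGroup.mk q.2} =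
      (fun q : SLR n × SLR n => q.1⁻¹ * q.2) ⁻¹' (GammaZ n : Set (SLR n)) := by
    ext q
    exact QuotientGroup.eq
  rw [this]
  exact isClosed_GammaZ.preimage (by fun_prop)

theorem isOpenMap_orbit (y : Quo n) : IsOpenMap fun g : SLR n => g • y := by
  induction y using QuotientGroup.induction_on with
  | H g₀ =>
    exact QuotientGroup.isOpenMap_coe.comp (isOpenMap_mul_right g₀)

/-- Limits along a fixed nonprincipal ultrafilter replace the extraction of convergent
subsequences, so that no metrizability of the quotient is needed. -/
theorem exists_ultralimit {α : Type*} [TopologicalSpace α] {K : Set α} (hK : IsCompact K)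
    {f : ℕ → α} (hf : ∀ k, f k ∈ K) : ∃ x ∈ K, Tendsto f (hyperfilter ℕ) (𝓝 x) :=
  hK.ultrafilter_le_nhds ((hyperfilter ℕ).map f)
    (tendsto_principal.2 (Eventually.of_forall hf))

/-! ### The diagonal group and the root groups -/

/-- The exponential parametrisation of the positive diagonal group `A`: `t` is first projected to
the vectors of coordinate sum zero, so that every `t : Fin n → ℝ` gives an element of `A`. -/
noncomputable def expD (t : Fin n → ℝ) : SLR n :=
  ⟨Matrix.diagonal fun p => Real.exp (t p - (∑ q, t q) / n), by
    rw [Matrix.det_diagonal, ← Real.exp_sum, Real.exp_eq_one_iff]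
    rcases Nat.eq_zero_or_pos n with rfl | hn
    · simp
    · have : (n : ℝ) ≠ 0 := by positivity
      simp only [Finset.sum_sub_distrib, Finset.sum_const, Finset.card_univ, Fintype.card_fin,
        nsmul_eq_mul]
      field_simp
      ring⟩

theorem expD_val (t : Fin n → ℝ) :
    (expD t).1 = Matrix.diagonal fun p => Real.exp (t p - (∑ q, t q) / n) := rfl

theorem expD_add (s t : Fin n → ℝ) : expD (s + t) = expD s * expD t := by
  apply Subtype.ext
  rw [Matrix.SpecialLinearGroup.coe_mul, expD_val, expD_val, expD_val, Matrix.diagonal_mul_diagonal]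
  congr 1
  ext p
  rw [← Real.exp_add]
  congr 1
  simp only [Pi.add_apply, Finset.sum_add_distrib]
  ring

theorem expD_zero : expD (0 : Fin n → ℝ) = 1 := by
  apply Subtype.ext
  simp [expD_val]

theorem expD_neg (t : Fin n → ℝ) : expD (-t) = (expD t)⁻¹ := by
  rw [eq_inv_iff_mul_eq_one, ← expD_add, neg_add_cancel, expD_zero]

theorem expD_conj (t : Fin n → ℝ) (g : SLR n) (p q : Fin n) :
    (expD t * g * (expD t)⁻¹).1 p q = Real.exp (t p - t q) * g.1 p q := by
  rw [← expD_neg, Matrix.SpecialLinearGroup.coe_mul, Matrix.SpecialLinearGroup.coe_mul,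
    expD_val, expD_val, Matrix.mul_diagonal, Matrix.diagonal_mul, mul_right_comm, ← Real.exp_add]
  congr 2
  simp only [Pi.neg_apply, Finset.sum_neg_distrib]
  ring

theorem continuous_expD : Continuous (expD : (Fin n → ℝ) → SLR n) := by
  rw [continuous_iff_continuousAt]
  intro t
  refine tendsto_of_entries fun p q => ?_
  have : Continuous fun t : Fin n → ℝ => (expD t).1 p q := by
    simp only [expD_val, Matrix.diagonal_apply]
    split_ifs <;> fun_prop
  exact this.tendsto t

theorem expD_mem (t : Fin n → ℝ) : expD t ∈ posDiag n := by
  refine ⟨fun i j hij => ?_, fun i => ?_⟩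
  · simp [expD_val, hij]
  · simp [expD_val, Real.exp_pos]

theorem expD_mem_rootKer {i j : Fin n} {t : Fin n → ℝ} (h : t i = t j) :
    expD t ∈ rootKer n i j :=
  ⟨expD_mem t, by simp [expD_val, h]⟩

theorem exists_expD {g : SLR n} (hg : g ∈ posDiag n) :
    ∃ t : Fin n → ℝ, (∀ p, t p = Real.log (g.1 p p)) ∧ g = expD t := by
  refine ⟨fun p => Real.log (g.1 p p), fun _ => rfl, ?_⟩
  have hd : g.1 = Matrix.diagonal fun p => g.1 p p := by
    ext p q
    by_cases hpq : p = q
    · simp [hpq]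
    · simp [hpq, hg.1 p q hpq]
  have hs : ∑ q, Real.log (g.1 q q) = 0 := by
    rw [← Real.log_prod fun i _ => (hg.2 i).ne', ← Matrix.det_diagonal, ← hd, g.2, Real.log_one]
  apply Subtype.ext
  rw [expD_val, hs]
  conv_lhs => rw [hd]
  congr 1
  ext p
  simp [Real.exp_log (hg.2 p)]

theorem exists_expD_of_rootKer {i j : Fin n} {g : SLR n} (hg : g ∈ rootKer n i j) :
    ∃ t : Fin n → ℝ, t i = t j ∧ g = expD t := by
  obtain ⟨t, ht, h⟩ := exists_expD hg.1
  exact ⟨t, by rw [ht, ht, hg.2], h⟩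

theorem elemU_apply {i j : Fin n} (hij : i ≠ j) (s : ℝ) (p q : Fin n) :
    (elemU n hij s).1 p q = (if p = q then 1 else 0) + if i = p ∧ j = q then s else 0 := by
  simp [elemU, Matrix.transvection, Matrix.one_apply, Matrix.single_apply]

theorem elemU_add {i j : Fin n} (hij : i ≠ j) (s r : ℝ) :
    elemU n hij (s + r) = elemU n hij s * elemU n hij r :=
  Subtype.ext (Matrix.transvection_mul_transvection_same i j hij s r).symm

theorem elemU_zero {i j : Fin n} (hij : i ≠ j) : elemU n hij 0 = 1 :=
  Subtype.ext (Matrix.transvection_zero i j)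

theorem continuous_elemU {i j : Fin n} (hij : i ≠ j) : Continuous (elemU n hij) := by
  rw [continuous_iff_continuousAt]
  intro t
  refine tendsto_of_entries fun p q => ?_
  have : Continuous fun t => (elemU n hij t).1 p q := by
    simp only [elemU_apply]
    split_ifs <;> fun_prop
  exact this.tendsto t

/-- `a u_α(s) a⁻¹ = u_α(α(a) s)`. -/
theorem expD_mul_elemU {i j : Fin n} (hij : i ≠ j) (t : Fin n → ℝ) (s : ℝ) :
    expD t * elemU n hij s = elemU n hij (Real.exp (t i - t j) * s) * expD t := by
  rw [← mul_inv_eq_iff_eq_mul]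
  apply Subtype.ext
  ext p q
  rw [expD_conj, elemU_apply, elemU_apply]
  by_cases h : i = p ∧ j = q
  · obtain ⟨rfl, rfl⟩ := h
    simp [hij]
  · by_cases hpq : p = q
    · subst hpq
      simp [h]
    · simp [h, hpq]

/-! ### Minimal sets for the kernel of a root -/

/-- `M` is a closed minimal set for the kernel `A_α` of the root `α = α_{ij}`; density of orbits
is phrased as: a closed set containing one `A_α`-orbit of `M` contains `M`. -/
structure Mini (i j : Fin n) (M : Set (Quo n)) : Prop where
  ne : M.Nonempty
  closed : IsClosed M
  inv : ∀ t : Fin n → ℝ, t i = t j → ∀ z ∈ M, expD t • z ∈ M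
  dense : ∀ z ∈ M, ∀ C : Set (Quo n), IsClosed C →
    (∀ t : Fin n → ℝ, t i = t j → expD t • z ∈ C) → M ⊆ C

theorem expD_comm_smul (s t : Fin n → ℝ) (z : Quo n) :
    expD s • expD t • z = expD t • expD s • z := by
  rw [smul_smul, smul_smul, ← expD_add, ← expD_add, add_comm]

theorem expD_neg_smul_smul (t : Fin n → ℝ) (z : Quo n) : expD (-t) • expD t • z = z := by
  rw [expD_neg, inv_smul_smul]

theorem expD_smul_neg_smul (t : Fin n → ℝ) (z : Quo n) : expD t • expD (-t) • z = z := by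
  rw [expD_neg, smul_inv_smul]

namespace Mini

variable {i j : Fin n} {M M' : Set (Quo n)}

theorem subset_of_mem (h : Mini i j M) (h' : Mini i j M') {z : Quo n} (hz : z ∈ M)
    (hz' : z ∈ M') : M ⊆ M' :=
  h.dense z hz M' h'.closed fun t ht => h'.inv t ht z hz'

theorem eq_of_mem (h : Mini i j M) (h' : Mini i j M') {z : Quo n} (hz : z ∈ M)
    (hz' : z ∈ M') : M = M' :=
  (h.subset_of_mem h' hz hz').antisymm (h'.subset_of_mem h hz' hz)

theorem mem_translate {t : Fin n → ℝ} {z : Quo n} :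
    z ∈ expD t • M ↔ expD (-t) • z ∈ M := by
  rw [Set.mem_smul_set_iff_inv_smul_mem, expD_neg]

theorem translate (h : Mini i j M) (t : Fin n → ℝ) : Mini i j (expD t • M) where
  ne := h.ne.smul_set
  closed := h.closed.smul _
  inv s hs z hz := by
    rw [mem_translate] at hz ⊢
    rw [expD_comm_smul]
    exact h.inv s hs _ hz
  dense z hz C hC hzC := by
    rw [mem_translate] at hz
    intro w hw
    rw [mem_translate] at hw
    have := h.dense _ hz ((fun x => expD t • x) ⁻¹' C) (hC.preimage (continuous_const_smul _))
      (fun s hs => by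
        simp only [Set.mem_preimage]
        rw [expD_comm_smul t s, expD_smul_neg_smul]
        exact hzC s hs) hw
    simpa [expD_smul_neg_smul] using this

theorem isMinimalOn (h : Mini i j M) : IsMinimalOn (rootKer n i j) M := by
  refine ⟨h.ne, ?_, fun z hz => ?_⟩
  · intro g hg
    obtain ⟨t, ht, rfl⟩ := exists_expD_of_rootKer hg
    apply Set.Subset.antisymm
    · rintro _ ⟨z, hz, rfl⟩
      exact h.inv t ht z hz
    · intro z hz
      exact ⟨expD (-t) • z, h.inv (-t) (by simp [ht]) z hz, expD_smul_neg_smul t z⟩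
  · exact h.dense z hz _ isClosed_closure fun t ht =>
      subset_closure ⟨expD t, expD_mem_rootKer ht, rfl⟩

/-- Zorn's lemma: a nonempty compact invariant set contains a minimal set. -/
theorem exists_subset {Y : Set (Quo n)} (hYc : IsCompact Y) (hYne : Y.Nonempty) (i j : Fin n)
    (hinv : ∀ t : Fin n → ℝ, ∀ z ∈ Y, expD t • z ∈ Y) : ∃ M ⊆ Y, Mini i j M := by
  let S : Set (Set (Quo n)) := {C | C ⊆ Y ∧ C.Nonempty ∧ IsClosed C ∧
    ∀ t : Fin n → ℝ, t i = t j → ∀ z ∈ C, expD t • z ∈ C}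
  have hYS : Y ∈ S := ⟨subset_rfl, hYne, hYc.isClosed, fun t _ => hinv t⟩
  obtain ⟨M, -, hM⟩ := zorn_superset_nonempty S (fun c hcS hc hcne => by
    refine ⟨⋂₀ c, ⟨?_, ?_, ?_, ?_⟩, fun s hs => Set.sInter_subset_of_mem hs⟩
    · obtain ⟨C, hC⟩ := hcne
      exact (Set.sInter_subset_of_mem hC).trans (hcS hC).1
    · have : Nonempty c := hcne.to_subtype
      rw [Set.sInter_eq_iInter]
      refine IsCompact.nonempty_iInter_of_directed_nonempty_isCompact_isClosed _ ?_
        (fun C => (hcS C.2).2.1)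
        (fun C => hYc.of_isClosed_subset (hcS C.2).2.2.1 (hcS C.2).1) (fun C => (hcS C.2).2.2.1)
      intro C D
      rcases hc.total C.2 D.2 with h | h
      · exact ⟨C, subset_rfl, h⟩
      · exact ⟨D, h, subset_rfl⟩
    · exact isClosed_sInter fun C hC => (hcS hC).2.2.1
    · intro t ht z hz C hC
      exact (hcS hC).2.2.2 t ht z (hz C hC)) Y hYS
  obtain ⟨hMY, hMne, hMcl, hMinv⟩ := hM.prop
  refine ⟨M, hMY, hMne, hMcl, hMinv, fun z hz C hC hzC => ?_⟩
  -- The points whose whole `A_α`-orbit lies in `C` form a closed invariant subset of `M`.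
  have hD : {w ∈ M | ∀ t : Fin n → ℝ, t i = t j → expD t • w ∈ C} ∈ S := by
    refine ⟨fun w hw => hMY hw.1, ⟨z, hz, hzC⟩, ?_, ?_⟩
    · have : {w ∈ M | ∀ t : Fin n → ℝ, t i = t j → expD t • w ∈ C} =
          M ∩ ⋂ t : {t : Fin n → ℝ // t i = t j}, (fun w => expD t.1 • w) ⁻¹' C := by
        ext w; simp
      rw [this]
      exact hMcl.inter (isClosed_iInter fun t => hC.preimage (continuous_const_smul _))
    · intro t ht w hw
      refine ⟨hMinv t ht w hw.1, fun s hs => ?_⟩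
      rw [smul_smul, ← expD_add]
      exact hw.2 _ (by simp [hs, ht])
  intro w hw
  have := (hM.le_of_le hD fun w hw => hw.1) hw
  simpa [expD_zero] using this.2 0 rfl

end Mini

/-! ### Non-vanishing of matrix entries over a compact `A`-invariant set -/

/-- Compactness lifts to bounded representatives. -/
theorem exists_bound {Y : Set (Quo n)} (hYc : IsCompact Y) :
    ∃ C : ℝ, ∀ y ∈ Y, ∃ h : SLR n, (QuotientGroup.mk h : Quo n) = y ∧ ∀ p q, |h⁻¹.1 p q| < C := by
  let V : ℝ → Set (SLR n) := fun C => {h | ∀ p q, |h⁻¹.1 p q| < C}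
  have hVo : ∀ C, IsOpen (V C) := fun C => by
    have : V C = ⋂ p, ⋂ q, {h : SLR n | |h⁻¹.1 p q| < C} := by
      ext; simp [V]
    rw [this]
    exact isOpen_iInter_of_finite fun p => isOpen_iInter_of_finite fun q =>
      isOpen_lt ((continuous_entry p q).comp continuous_inv).abs continuous_const
  have hVm : Monotone V := fun C D hCD h hh p q => (hh p q).trans_le hCD
  obtain ⟨C, hC⟩ := hYc.elim_directed_cover
    (fun C : ℝ => (QuotientGroup.mk : SLR n → Quo n) '' V C)
    (fun C => QuotientGroup.isOpenMap_coe _ (hVo C))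
    (fun y _ => by
      induction y using QuotientGroup.induction_on with
      | H g =>
        refine Set.mem_iUnion.2 ⟨(∑ p, ∑ q, |g⁻¹.1 p q|) + 1, g, fun p q => ?_, rfl⟩
        have h1 : |g⁻¹.1 p q| ≤ ∑ q, |g⁻¹.1 p q| :=
          Finset.single_le_sum (f := fun q => |g⁻¹.1 p q|) (fun _ _ => abs_nonneg _)
            (Finset.mem_univ q)
        have h2 : ∑ q, |g⁻¹.1 p q| ≤ ∑ p, ∑ q, |g⁻¹.1 p q| :=
          Finset.single_le_sum (f := fun p => ∑ q, |g⁻¹.1 p q|)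
            (fun _ _ => Finset.sum_nonneg fun _ _ => abs_nonneg _) (Finset.mem_univ p)
        linarith)
    (fun C D => ⟨max C D, Set.image_mono (hVm (le_max_left _ _)),
      Set.image_mono (hVm (le_max_right _ _))⟩)
  exact ⟨C, fun y hy => by
    obtain ⟨h, hh, rfl⟩ := hC hy
    exact ⟨h, rfl, hh⟩⟩

/-- If a vector `g e_c` of the lattice `g ℤⁿ` had a zero coordinate, then the diagonal group could
shrink it to `0`, which the compactness of `Y` forbids. -/
theorem entry_ne_zero {Y : Set (Quo n)} (hYc : IsCompact Y)
    (hinv : ∀ t : Fin n → ℝ, ∀ z ∈ Y, expD t • z ∈ Y) {g : SLR n}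
    (hg : (QuotientGroup.mk g : Quo n) ∈ Y) (i c : Fin n) : g.1 i c ≠ 0 := by
  intro h0
  have hn : (0 : ℝ) < n := by exact_mod_cast i.pos
  obtain ⟨C, hC⟩ := exists_bound hYc
  -- The size of the integral vector found below is controlled by this quantity.
  have hlim : Tendsto (fun k : ℝ => Real.exp (-(k / n)) * (C * ∑ q, |g.1 q c|)) atTop (𝓝 0) := by
    have h1 : Tendsto (fun k : ℝ => Real.exp (-(k / n))) atTop (𝓝 0) :=
      Real.tendsto_exp_neg_atTop_nhds_zero.comp (tendsto_id.atTop_div_const hn)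
    simpa using h1.mul_const (C * ∑ q, |g.1 q c|)
  obtain ⟨k, hk⟩ := (hlim.eventually_lt_const one_pos).exists
  let t : Fin n → ℝ := Pi.single i k
  obtain ⟨h, hh, hhC⟩ := hC _ (hinv t _ hg)
  have hmem : h⁻¹ * (expD t * g) ∈ GammaZ n := QuotientGroup.eq.1 hh
  obtain ⟨m, hm⟩ := hmem
  have hentry : ∀ p, ((m.1 p c : ℤ) : ℝ) = (h⁻¹ * (expD t * g)).1 p c := fun p => by
    rw [← hm]; rfl
  have hcol : ∀ q, |(expD t * g).1 q c| ≤ Real.exp (-(k / n)) * |g.1 q c| := fun q => by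
    rw [Matrix.SpecialLinearGroup.coe_mul, expD_val, Matrix.diagonal_mul]
    by_cases hq : q = i
    · subst hq; simp [h0]
    · simp [t, hq, abs_mul]
  have hzero : ∀ p, m.1 p c = 0 := fun p => by
    rw [← Int.abs_lt_one_iff]
    have : |((m.1 p c : ℤ) : ℝ)| < 1 := by
      rw [hentry, Matrix.SpecialLinearGroup.coe_mul, Matrix.mul_apply]
      refine lt_of_le_of_lt ((Finset.abs_sum_le_sum_abs _ _).trans ?_) hk
      rw [Finset.mul_sum, Finset.mul_sum]
      refine Finset.sum_le_sum fun q _ => ?_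
      rw [abs_mul]
      calc |h⁻¹.1 p q| * |(expD t * g).1 q c| ≤ C * (Real.exp (-(k / n)) * |g.1 q c|) :=
            mul_le_mul (hhC p q).le (hcol q) (abs_nonneg _) ((abs_nonneg _).trans (hhC p q).le)
        _ = _ := by ring
    exact_mod_cast this
  have := Matrix.det_eq_zero_of_column_eq_zero c hzero
  rw [m.2] at this
  exact one_ne_zero this

/-! ### Two points of `Y` on the same root-group orbit coincide -/

/-- Baire category: some element `d ∈ A` with `α(d) < 1` maps the minimal set `M` to itself. -/
theorem exists_return {Y M : Set (Quo n)} {i j : Fin n} (hij : i ≠ j) (hYc : IsCompact Y)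
    (hinv : ∀ t : Fin n → ℝ, ∀ z ∈ Y, expD t • z ∈ Y)
    (hdense : ∀ z ∈ Y, ∀ O : Set (Quo n), IsOpen O → (Y ∩ O).Nonempty →
      ∃ t : Fin n → ℝ, expD t • z ∈ O)
    (hM : Mini i j M) (hMY : M ⊆ Y)
    (hcov : ∀ y ∈ Y, ∃ t : Fin n → ℝ, y ∈ expD t • M) :
    ∃ d : Fin n → ℝ, d i < d j ∧ expD d • M = M := by
  have hMc : IsCompact M := hYc.of_isClosed_subset hM.closed hMY
  let e : ℝ → Fin n → ℝ := fun s => Pi.single i s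
  have he : Continuous e := continuous_single (A := fun _ => ℝ) i
  have hred : ∀ (t : Fin n → ℝ) (y : Quo n), y ∈ expD t • M → y ∈ expD (e (t i - t j)) • M := by
    intro t y hy
    rw [Mini.mem_translate] at hy ⊢
    have := hM.inv (t - e (t i - t j)) (by simp [e, hij.symm]) _ hy
    rwa [smul_smul, ← expD_add, show t - e (t i - t j) + -t = -e (t i - t j) by abel] at this
  let K : ℕ → Set (Quo n) := fun N =>
    (fun p : ℝ × Quo n => expD (e p.1) • p.2) '' (Set.Icc (-(N : ℝ)) N ×ˢ M)
  have hKc : ∀ N, IsClosed (K N) := fun N =>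
    ((isCompact_Icc.prod hMc).image
      (((continuous_expD.comp he).comp continuous_fst).smul continuous_snd)).isClosed
  have : CompactSpace Y := isCompact_iff_compactSpace.1 hYc
  have : Nonempty Y := (hM.ne.mono hMY).to_subtype
  obtain ⟨N, hN⟩ := nonempty_interior_of_iUnion_of_closed
    (f := fun N => (Subtype.val : Y → Quo n) ⁻¹' K N)
    (fun N => (hKc N).preimage continuous_subtype_val) (by
      rw [Set.eq_univ_iff_forall]
      rintro ⟨y, hy⟩
      obtain ⟨t, ht⟩ := hcov y hy
      obtain ⟨N, hN⟩ := exists_nat_ge |t i - t j|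
      obtain ⟨z, hz, hzy⟩ := hred t y ht
      exact Set.mem_iUnion.2 ⟨N, (t i - t j, z), ⟨abs_le.1 hN, hz⟩, hzy⟩)
  obtain ⟨O, hO, hOK⟩ := isOpen_induced_iff.1
    (isOpen_interior (s := (Subtype.val : Y → Quo n) ⁻¹' K N))
  have hOne : (Y ∩ O).Nonempty := by
    obtain ⟨y, hy⟩ := hN
    rw [← hOK] at hy
    exact ⟨y, y.2, hy⟩
  have hOK' : ∀ y ∈ Y, y ∈ O → y ∈ K N := fun y hy hyO => by
    have : (⟨y, hy⟩ : Y) ∈ (Subtype.val : Y → Quo n) ⁻¹' O := hyO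
    rw [hOK] at this
    have hmem : (⟨y, hy⟩ : Y) ∈ (Subtype.val : Y → Quo n) ⁻¹' K N := interior_subset this
    exact hmem
  -- Finitely many translates of `O` cover `Y`.
  obtain ⟨T, hT⟩ := hYc.elim_finite_subcover
    (fun t : Fin n → ℝ => (fun z : Quo n => expD t • z) ⁻¹' O)
    (fun t => hO.preimage (continuous_const_smul _))
    (fun y hy => by
      obtain ⟨t, ht⟩ := hdense y hy O hO hOne
      exact Set.mem_iUnion.2 ⟨t, ht⟩)
  -- Hence every point of `Y` lies in a translate of `M` by an element with bounded root value.
  obtain ⟨B, hB⟩ : ∃ B : ℝ, ∀ t ∈ T, |t i - t j| ≤ B :=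
    ⟨∑ t ∈ T, |t i - t j|, fun t ht =>
      Finset.single_le_sum (f := fun t : Fin n → ℝ => |t i - t j|) (fun _ _ => abs_nonneg _) ht⟩
  obtain ⟨z, hz⟩ := hM.ne
  let b' : Fin n → ℝ := e (N + B + 1)
  have hy : expD b' • z ∈ Y := hinv _ _ (hMY hz)
  obtain ⟨t, ht, htO⟩ := Set.mem_iUnion₂.1 (hT hy)
  obtain ⟨⟨s, x⟩, ⟨hs, hx⟩, hsx⟩ := hOK' _ (hinv t _ hy) htO
  simp only at hs hx hsx
  have hmem : expD (-t + e s) • x = expD b' • z := by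
    rw [expD_add, mul_smul, hsx, expD_neg_smul_smul]
  have heq : expD (-t + e s) • M = expD b' • M := by
    refine (hM.translate _).eq_of_mem (hM.translate _) (z := expD b' • z) ?_ ⟨z, hz, rfl⟩
    rw [← hmem]
    exact ⟨x, hx, rfl⟩
  refine ⟨-b' + (-t + e s), ?_, ?_⟩
  · have h1 := abs_le.1 (hB t ht)
    have h2 := hs.2
    simp only [Pi.add_apply, Pi.neg_apply, b', e, Pi.single_eq_same, Pi.single_eq_of_ne hij.symm]
    linarith
  · rw [expD_add, mul_smul, heq, expD_neg, inv_smul_smul]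

/-- A minimal set for `A_α` invariant under some `u_α(s)`, `s ≠ 0`, and under some `d ∈ A` with
`α(d) < 1` is invariant under the whole root group, because the admissible `s` form a closed
subgroup of `ℝ` containing arbitrarily small elements. -/
theorem unip_inv_all {M : Set (Quo n)} {i j : Fin n} (hij : i ≠ j) (hM : Mini i j M)
    {d : Fin n → ℝ} (hd : d i < d j) (hdM : expD d • M = M) {s : ℝ} (hs : s ≠ 0) {z : Quo n}
    (hz : z ∈ M) (hsz : elemU n hij s • z ∈ M) (r : ℝ) (w : Quo n) (hw : w ∈ M) :
    elemU n hij r • w ∈ M := by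
  have gen : ∀ (s : ℝ) (z : Quo n), z ∈ M → elemU n hij s • z ∈ M →
      ∀ w ∈ M, elemU n hij s • w ∈ M := by
    intro s z hz hsz w hw
    refine hM.dense z hz ((fun w => elemU n hij s • w) ⁻¹' M)
      (hM.closed.preimage (continuous_const_smul _)) (fun t ht => ?_) hw
    have := expD_mul_elemU hij t s
    rw [ht, sub_self, Real.exp_zero, one_mul] at this
    rw [Set.mem_preimage, smul_smul, ← this, mul_smul]
    exact hM.inv t ht _ hsz
  let S : AddSubgroup ℝ :=
    { carrier := {s | ∀ w ∈ M, elemU n hij s • w ∈ M}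
      zero_mem' := fun w hw => by rwa [elemU_zero, one_smul]
      add_mem' := fun {a b} ha hb w hw => by
        rw [elemU_add, mul_smul]
        exact ha _ (hb _ hw)
      neg_mem' := fun {a} ha => by
        obtain ⟨w, hw⟩ := hM.ne
        refine gen (-a) _ (ha w hw) ?_
        rwa [smul_smul, ← elemU_add, neg_add_cancel, elemU_zero, one_smul] }
  have hsS : s ∈ S := gen s z hz hsz
  have hscale : ∀ a ∈ S, Real.exp (d i - d j) * a ∈ S := by
    intro a ha w hw
    have hw' : expD (-d) • w ∈ M := by rwa [← Mini.mem_translate, hdM]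
    have := expD_mul_elemU hij d a
    have h2 : expD d • elemU n hij a • expD (-d) • w ∈ expD d • M := ⟨_, ha _ hw', rfl⟩
    rwa [hdM, smul_smul, this, mul_smul, expD_smul_neg_smul] at h2
  have habs : |s| ∈ S := by
    rcases abs_choice s with h | h <;> rw [h]
    · exact hsS
    · exact S.neg_mem hsS
  have hpow : ∀ k : ℕ, Real.exp (d i - d j) ^ k * |s| ∈ S := by
    intro k
    induction k with
    | zero => simpa using habs
    | succ k ih =>
      rw [pow_succ', mul_assoc]
      exact hscale _ ih
  have hdense : Dense (S : Set ℝ) := by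
    refine S.dense_of_not_isolated_zero fun ε hε => ?_
    have h0 : Tendsto (fun k : ℕ => Real.exp (d i - d j) ^ k * |s|) atTop (𝓝 (0 * |s|)) :=
      (tendsto_pow_atTop_nhds_zero_of_lt_one (Real.exp_pos _).le
        (Real.exp_lt_one_iff.2 (by linarith))).mul_const _
    rw [zero_mul] at h0
    obtain ⟨k, hk⟩ := (h0.eventually_lt_const hε).exists
    exact ⟨_, hpow k, by positivity, hk⟩
  have hclosed : IsClosed (S : Set ℝ) := by
    have : (S : Set ℝ) = ⋂ w : M, (fun s : ℝ => elemU n hij s • (w : Quo n)) ⁻¹' M := by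
      ext a
      simp only [Set.mem_iInter, Set.mem_preimage, Subtype.forall]
      exact Iff.rfl
    rw [this]
    exact isClosed_iInter fun w => hM.closed.preimage ((continuous_elemU hij).smul continuous_const)
  have : r ∈ (S : Set ℝ) := by
    rw [← hclosed.closure_eq, hdense.closure_eq]
    trivial
  exact this w hw

/-- If `z` and `u_α(s) z` both lie in `Y`, then `s = 0`. For `s ≠ 0` both points would lie in one
`A_α`-minimal set, which would then be invariant under the whole root group `U_α`; moving `z` by a
suitable element of `U_α` then produces a zero entry, contradicting `entry_ne_zero`. -/
theorem unip_trivial {Y : Set (Quo n)} {i j : Fin n} (hij : i ≠ j) (hYc : IsCompact Y)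
    (hinv : ∀ t : Fin n → ℝ, ∀ z ∈ Y, expD t • z ∈ Y)
    (hdense : ∀ z ∈ Y, ∀ O : Set (Quo n), IsOpen O → (Y ∩ O).Nonempty →
      ∃ t : Fin n → ℝ, expD t • z ∈ O)
    (hcov : ∀ M ⊆ Y, Mini i j M → ∀ y ∈ Y, ∃ t : Fin n → ℝ, y ∈ expD t • M)
    {s : ℝ} {z : Quo n} (hz : z ∈ Y) (hsz : elemU n hij s • z ∈ Y) : s = 0 := by
  by_contra hs
  obtain ⟨M, hMY, hM, hzM⟩ : ∃ M ⊆ Y, Mini i j M ∧ z ∈ M := by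
    obtain ⟨M, hMY, hM⟩ := Mini.exists_subset hYc ⟨z, hz⟩ i j hinv
    obtain ⟨t, ht⟩ := hcov M hMY hM z hz
    refine ⟨expD t • M, ?_, hM.translate t, ht⟩
    rintro _ ⟨w, hw, rfl⟩
    exact hinv t w (hMY hw)
  have hMc : IsCompact M := hYc.of_isClosed_subset hM.closed hMY
  obtain ⟨d, hd, hdM⟩ := exists_return hij hYc hinv hdense hM hMY (hcov M hMY hM)
  have hkM : ∀ (k : ℕ) (M' : Set (Quo n)), expD d • M' = M' →
      ∀ w ∈ M', expD ((k : ℝ) • d) • w ∈ M' := by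
    intro k M' hM' w hw
    induction k with
    | zero => simpa [expD_zero] using hw
    | succ k ih =>
      rw [Nat.cast_succ, add_smul, one_smul, add_comm, expD_add, mul_smul, ← hM']
      exact ⟨_, ih, rfl⟩
  -- Contracting by powers of `d` brings `z` and `u_α(s) z` together, so that they lie in the same
  -- translate of `M`.
  obtain ⟨b, hb⟩ := hcov M hMY hM _ hsz
  have hbd : expD d • (expD b • M) = expD b • M := by
    rw [smul_smul, ← expD_add, add_comm, expD_add, mul_smul, hdM]
  obtain ⟨z', hz', hlim'⟩ := exists_ultralimit hMc (fun k => hkM k M hdM z hzM)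
  have hle : (hyperfilter ℕ : Filter ℕ) ≤ atTop := Nat.hyperfilter_le_atTop
  have hexp : Tendsto (fun k : ℕ => Real.exp (((k : ℝ) • d) i - ((k : ℝ) • d) j) * s)
      (hyperfilter ℕ) (𝓝 0) := by
    have h0 : Tendsto (fun k : ℕ => Real.exp (d i - d j) ^ k * s) atTop (𝓝 (0 * s)) :=
      (tendsto_pow_atTop_nhds_zero_of_lt_one (Real.exp_pos _).le
        (Real.exp_lt_one_iff.2 (by linarith))).mul_const _
    rw [zero_mul] at h0
    refine (h0.mono_left hle).congr fun k => ?_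
    rw [← Real.exp_nat_mul]
    simp only [Pi.smul_apply, smul_eq_mul, mul_sub]
  have hz'b : z' ∈ expD b • M := by
    have h1 := (((continuous_elemU hij).tendsto 0).comp hexp).smul hlim'
    rw [elemU_zero, one_smul] at h1
    refine (hM.translate b).closed.mem_of_tendsto h1 (Eventually.of_forall fun k => ?_)
    have := hkM k _ hbd _ hb
    rwa [smul_smul, expD_mul_elemU, mul_smul] at this
  rw [← hM.eq_of_mem (hM.translate b) hz' hz'b] at hb
  -- Root-group invariance lets one annihilate an entry of a representative.
  induction z using QuotientGroup.induction_on with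
  | H g =>
    have hj := entry_ne_zero hYc hinv (hMY hzM) j j
    have hr := hMY (unip_inv_all hij hM hd hdM hs hzM hb (-(g.1 i j / g.1 j j)) _ hzM)
    refine entry_ne_zero hYc hinv (g := elemU n hij (-(g.1 i j / g.1 j j)) * g) hr i j ?_
    rw [Matrix.SpecialLinearGroup.coe_mul, Matrix.mul_apply]
    simp only [elemU_apply, true_and, add_mul, ite_mul, one_mul, zero_mul, Finset.sum_add_distrib,
      Finset.sum_ite_eq, Finset.mem_univ, if_true]
    field_simp
    ring

/-! ### Isolating a root -/

/-- Expanding along `w` renormalises the largest entry `g_{pq}` with `w p < w q` to absolute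
value one. -/
theorem renormalise {Y : Set (Quo n)} (hinv : ∀ t : Fin n → ℝ, ∀ z ∈ Y, expD t • z ∈ Y)
    (w : Fin n → ℝ) {ε : ℝ} (hε1 : ε ≤ 1) {g : SLR n} {y : Quo n} (hy : y ∈ Y) (hgy : g • y ∈ Y)
    (hg : ∀ p q, |g.1 p q - if p = q then 1 else 0| < ε)
    (hne : ∃ p q, w p < w q ∧ g.1 p q ≠ 0) :
    ∃ (h : SLR n) (z : Quo n), z ∈ Y ∧ h • z ∈ Y ∧ (∀ p, |h.1 p p - 1| < ε) ∧
      (∀ p q, w q < w p → |h.1 p q| < ε) ∧ (∀ p q, w p < w q → |h.1 p q| ≤ 1) ∧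
      ∃ p q, w p < w q ∧ |h.1 p q| = 1 := by
  have hoff : ∀ p q, p ≠ q → |g.1 p q| < ε := fun p q hpq => by simpa [hpq] using hg p q
  let T : Finset (Fin n × Fin n) :=
    Finset.univ.filter fun x => w x.1 < w x.2 ∧ g.1 x.1 x.2 ≠ 0
  have hT : T.Nonempty := by
    obtain ⟨p, q, h⟩ := hne
    exact ⟨(p, q), by simpa [T] using h⟩
  obtain ⟨⟨p₀, q₀⟩, hm, hmin⟩ := T.exists_min_image
    (fun x => -Real.log |g.1 x.1 x.2| / (w x.2 - w x.1)) hT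
  simp only [T, Finset.mem_filter, Finset.mem_univ, true_and] at hm hmin
  set τ : ℝ := -Real.log |g.1 p₀ q₀| / (w q₀ - w p₀) with hτ
  have hτ0 : 0 ≤ τ := by
    apply div_nonneg _ (sub_pos.2 hm.1).le
    have := Real.log_nonpos (abs_nonneg _)
      ((hoff p₀ q₀ (fun h => by simp [h] at hm)).le.trans hε1)
    linarith
  have hentry : ∀ p q, (expD (-τ • w) * g * (expD (-τ • w))⁻¹).1 p q =
      Real.exp (τ * (w q - w p)) * g.1 p q := fun p q => by
    rw [expD_conj]
    congr 2
    simp only [Pi.smul_apply, smul_eq_mul]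
    ring
  refine ⟨expD (-τ • w) * g * (expD (-τ • w))⁻¹, expD (-τ • w) • y, hinv _ _ hy, ?_, ?_, ?_, ?_,
    p₀, q₀, hm.1, ?_⟩
  · rw [mul_smul, inv_smul_smul, mul_smul]
    exact hinv _ _ hgy
  · intro p
    rw [hentry]
    simpa using hg p p
  · intro p q hpq
    rw [hentry, abs_mul, Real.abs_exp]
    have h1 : Real.exp (τ * (w q - w p)) ≤ 1 :=
      Real.exp_le_one_iff.2 (mul_nonpos_of_nonneg_of_nonpos hτ0 (by linarith))
    calc _ ≤ 1 * |g.1 p q| := mul_le_mul_of_nonneg_right h1 (abs_nonneg _)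
      _ < ε := by
        rw [one_mul]
        exact hoff p q fun h => by simp [h] at hpq
  · intro p q hpq
    rw [hentry, abs_mul, Real.abs_exp]
    by_cases h0 : g.1 p q = 0
    · simp [h0]
    · have h1 := hmin (p, q) ⟨hpq, h0⟩
      rw [le_div_iff₀ (sub_pos.2 hpq)] at h1
      have h2 : 0 < |g.1 p q| := abs_pos.2 h0
      calc _ = Real.exp (τ * (w q - w p)) * Real.exp (Real.log |g.1 p q|) := by
            rw [Real.exp_log h2]
        _ ≤ 1 := by
            rw [← Real.exp_add, Real.exp_le_one_iff]
            simp only at h1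
            linarith
  · have h2 : 0 < |g.1 p₀ q₀| := abs_pos.2 hm.2
    rw [hentry, abs_mul, Real.abs_exp, hτ, div_mul_cancel₀ _ (sub_pos.2 hm.1).ne', Real.exp_neg,
      Real.exp_log h2, inv_mul_cancel₀ h2.ne']

/-- Displacements inside `Y` that accumulate at the identity with a nonzero entry in the
directions expanded by `w` produce, in the limit, a nontrivial displacement in the corresponding
horospherical group. -/
theorem exists_horospherical {Y : Set (Quo n)} (hYc : IsCompact Y)
    (hinv : ∀ t : Fin n → ℝ, ∀ z ∈ Y, expD t • z ∈ Y)
    {w : Fin n → ℝ} (hw : Function.Injective w) {y : Quo n} (hy : y ∈ Y)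
    (H : ∀ ε > 0, ∃ g : SLR n, (∀ p q, |g.1 p q - if p = q then 1 else 0| < ε) ∧ g • y ∈ Y ∧
      ∃ p q, w p < w q ∧ g.1 p q ≠ 0) :
    ∃ (h : SLR n) (z : Quo n), z ∈ Y ∧ h • z ∈ Y ∧ (∀ p, h.1 p p = 1) ∧
      (∀ p q, w q < w p → h.1 p q = 0) ∧ ∃ p q, w p < w q ∧ h.1 p q ≠ 0 := by
  have H' : ∀ k : ℕ, ∃ (h : SLR n) (z : Quo n), z ∈ Y ∧ h • z ∈ Y ∧
      (∀ p, |h.1 p p - 1| < 1 / ((k : ℝ) + 1)) ∧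
      (∀ p q, w q < w p → |h.1 p q| < 1 / ((k : ℝ) + 1)) ∧ (∀ p q, w p < w q → |h.1 p q| ≤ 1) ∧
      ∃ p q, w p < w q ∧ |h.1 p q| = 1 := fun k => by
    obtain ⟨g, hg, hgy, hne⟩ := H (1 / ((k : ℝ) + 1)) Nat.one_div_pos_of_nat
    refine renormalise hinv w ?_ hy hgy hg hne
    rw [div_le_one (by positivity)]
    linarith [(Nat.cast_nonneg k : (0 : ℝ) ≤ k)]
  choose hk zk hzY hhY hdiag hlow hup hone using H'
  have hk1 : ∀ k : ℕ, 1 / ((k : ℝ) + 1) ≤ 1 := fun k => by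
    rw [div_le_one (by positivity)]
    linarith [(Nat.cast_nonneg k : (0 : ℝ) ≤ k)]
  have hbox : ∀ k p q, |(hk k).1 p q| ≤ 2 := fun k p q => by
    rcases lt_trichotomy (w p) (w q) with h | h | h
    · linarith [hup k p q h]
    · obtain rfl := hw h
      have h1 := abs_lt.1 (hdiag k p)
      have h2 := hk1 k
      rw [abs_le]
      constructor <;> linarith
    · linarith [hlow k p q h, hk1 k]
  obtain ⟨h, -, hlim⟩ := exists_ultralimit (isCompact_box (n := n) 2) hbox
  obtain ⟨z, hz, hzlim⟩ := exists_ultralimit hYc hzY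
  have hent : ∀ p q, Tendsto (fun k => (hk k).1 p q) (hyperfilter ℕ) (𝓝 (h.1 p q)) :=
    fun p q => ((continuous_entry p q).tendsto h).comp hlim
  have hzero : Tendsto (fun k : ℕ => 1 / ((k : ℝ) + 1)) (hyperfilter ℕ) (𝓝 0) :=
    tendsto_one_div_add_atTop_nhds_zero_nat.mono_left Nat.hyperfilter_le_atTop
  refine ⟨h, z, hz, hYc.isClosed.mem_of_tendsto (hlim.smul hzlim) (Eventually.of_forall hhY),
    ?_, ?_, ?_⟩
  · intro p
    have h1 : Tendsto (fun k => (hk k).1 p p - 1) (hyperfilter ℕ) (𝓝 0) :=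
      squeeze_zero_norm (fun k => (hdiag k p).le) hzero
    have h2 := tendsto_nhds_unique h1 ((hent p p).sub_const 1)
    linarith
  · intro p q hpq
    have h1 : Tendsto (fun k => (hk k).1 p q) (hyperfilter ℕ) (𝓝 0) :=
      squeeze_zero_norm (fun k => (hlow k p q hpq).le) hzero
    exact tendsto_nhds_unique (hent p q) h1
  · by_contra! hcon
    -- Otherwise the sum of the expanded entries, which is at least one, would tend to zero.
    have hsum : Tendsto (fun k => ∑ p, ∑ q, if w p < w q then |(hk k).1 p q| else 0)
        (hyperfilter ℕ) (𝓝 (∑ p, ∑ q, if w p < w q then |h.1 p q| else 0)) := by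
      refine tendsto_finsetSum _ fun p _ => tendsto_finsetSum _ fun q _ => ?_
      split_ifs
      · exact (hent p q).abs
      · exact tendsto_const_nhds
    have hge : ∀ k, 1 ≤ ∑ p, ∑ q, if w p < w q then |(hk k).1 p q| else 0 := fun k => by
      obtain ⟨p, q, hpq, h1⟩ := hone k
      have hnn : ∀ p q, 0 ≤ if w p < w q then |(hk k).1 p q| else 0 := fun p q => by
        split_ifs <;> positivity
      calc (1 : ℝ) = if w p < w q then |(hk k).1 p q| else 0 := by rw [if_pos hpq, h1]
        _ ≤ ∑ q, if w p < w q then |(hk k).1 p q| else 0 :=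
            Finset.single_le_sum (f := fun q => if w p < w q then |(hk k).1 p q| else 0)
              (fun q _ => hnn p q) (Finset.mem_univ q)
        _ ≤ _ := Finset.single_le_sum
              (f := fun p => ∑ q, if w p < w q then |(hk k).1 p q| else 0)
              (fun p _ => Finset.sum_nonneg fun q _ => hnn p q) (Finset.mem_univ p)
    have h1 := ge_of_tendsto' hsum hge
    have h2 : (∑ p, ∑ q, if w p < w q then |h.1 p q| else 0) = 0 :=
      Finset.sum_eq_zero fun p _ => Finset.sum_eq_zero fun q _ => by
        split_ifs with hpq
        · simp [hcon p q hpq]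
        · rfl
    linarith

/-- A nontrivial displacement in a horospherical group can be contracted to one in a single root
group. -/
theorem exists_root {Y : Set (Quo n)} (hYc : IsCompact Y)
    (hinv : ∀ t : Fin n → ℝ, ∀ z ∈ Y, expD t • z ∈ Y)
    {w : Fin n → ℝ} (hw : Function.Injective w) {h : SLR n} {z : Quo n} (hz : z ∈ Y)
    (hhz : h • z ∈ Y) (hdiag : ∀ p, h.1 p p = 1) (hlow : ∀ p q, w q < w p → h.1 p q = 0)
    (hne : ∃ p q, w p < w q ∧ h.1 p q ≠ 0) :
    ∃ (i j : Fin n) (hij : i ≠ j) (s : ℝ) (z' : Quo n), s ≠ 0 ∧ z' ∈ Y ∧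
      elemU n hij s • z' ∈ Y := by
  let T : Finset (Fin n × Fin n) :=
    Finset.univ.filter fun x => w x.1 < w x.2 ∧ h.1 x.1 x.2 ≠ 0
  have hT : T.Nonempty := by
    obtain ⟨p, q, h⟩ := hne
    exact ⟨(p, q), by simpa [T] using h⟩
  -- Among the roots occurring in `h`, one of minimal height with respect to `w` is extremal.
  obtain ⟨⟨i, j⟩, hm, hmin⟩ := T.exists_min_image (fun x => w x.2 - w x.1) hT
  simp only [T, Finset.mem_filter, Finset.mem_univ, true_and] at hm hmin
  have hij : i ≠ j := fun h => by simp [h] at hm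
  -- Collapsing the interval `[w i, w j]` annihilates this root and keeps the other ones strictly
  -- contracted.
  let t : Fin n → ℝ := fun p => if w i ≤ w p ∧ w p ≤ w j then w i else w p
  have htij : t i = t j := by simp [t, hm.1.le]
  have htlt : ∀ p q, w p < w q → h.1 p q ≠ 0 → ¬(i = p ∧ j = q) → t p < t q := by
    intro p q hpq h0 hne
    have h1 := hmin (p, q) ⟨hpq, h0⟩
    simp only at h1
    have hne' : ¬(w i = w p ∧ w j = w q) := fun hh => hne ⟨hw hh.1, hw hh.2⟩
    simp only [t]
    split_ifs with h2 h3 h3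
    · exact absurd ⟨by linarith, by linarith⟩ hne'
    · by_contra! h4
      exact h3 ⟨by linarith, by linarith [hm.1]⟩
    · by_contra! h4
      exact h2 ⟨h4, by linarith⟩
    · exact hpq
  have hlimU : Tendsto (fun k : ℕ => expD ((k : ℝ) • t) * h * (expD ((k : ℝ) • t))⁻¹)
      (hyperfilter ℕ) (𝓝 (elemU n hij (h.1 i j))) := by
    refine Tendsto.mono_left ?_ Nat.hyperfilter_le_atTop
    refine tendsto_of_entries fun p q => ?_
    simp only [expD_conj, elemU_apply]
    by_cases hpq : i = p ∧ j = q
    · obtain ⟨rfl, rfl⟩ := hpq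
      simp [htij, hij]
    · rcases lt_trichotomy (w p) (w q) with hlt | heq | hlt
      · have hpq' : p ≠ q := fun h => by simp [h] at hlt
        by_cases h0 : h.1 p q = 0
        · simp [hpq, hpq', h0]
        · have hlt' := htlt p q hlt h0 hpq
          have h1 : Tendsto (fun k : ℕ => Real.exp (t p - t q) ^ k * h.1 p q) atTop
              (𝓝 (0 * h.1 p q)) :=
            (tendsto_pow_atTop_nhds_zero_of_lt_one (Real.exp_pos _).le
              (Real.exp_lt_one_iff.2 (by linarith))).mul_const _
          rw [if_neg hpq', if_neg hpq, add_zero]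
          rw [zero_mul] at h1
          refine h1.congr fun k => ?_
          rw [← Real.exp_nat_mul]
          simp only [Pi.smul_apply, smul_eq_mul, mul_sub]
      · obtain rfl := hw heq
        simp [hpq, hdiag]
      · have hpq' : p ≠ q := fun h => by simp [h] at hlt
        simp [hpq, hpq', hlow p q hlt]
  obtain ⟨z', hz', hzlim⟩ := exists_ultralimit hYc fun k : ℕ => hinv ((k : ℝ) • t) z hz
  refine ⟨i, j, hij, h.1 i j, z', hm.2, hz', hYc.isClosed.mem_of_tendsto (hlimU.smul hzlim)
    (Eventually.of_forall fun k => ?_)⟩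
  rw [mul_smul, inv_smul_smul, mul_smul]
  exact hinv _ _ hhz

/-- If the displacements from `y` to nearby points of `Y` are all diagonal, then the orbit `A y` is
relatively open in `Y`, hence equal to `Y`. -/
theorem eq_orbit {Y : Set (Quo n)} (hinv : ∀ t : Fin n → ℝ, ∀ z ∈ Y, expD t • z ∈ Y)
    (hdense : ∀ z ∈ Y, ∀ O : Set (Quo n), IsOpen O → (Y ∩ O).Nonempty →
      ∃ t : Fin n → ℝ, expD t • z ∈ O)
    {y : Quo n} (hy : y ∈ Y) {ε : ℝ} (hε : 0 < ε) (hε1 : ε ≤ 1)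
    (H : ∀ g : SLR n, (∀ p q, |g.1 p q - if p = q then 1 else 0| < ε) → g • y ∈ Y →
      ∀ p q, p ≠ q → g.1 p q = 0) :
    Y = (· • y) '' posDiag n := by
  let W : Set (SLR n) := {g | ∀ p q, |g.1 p q - if p = q then 1 else 0| < ε}
  have hW : IsOpen W := by
    have : W = ⋂ p, ⋂ q, {g : SLR n | |g.1 p q - if p = q then 1 else 0| < ε} := by
      ext; simp [W]
    rw [this]
    exact isOpen_iInter_of_finite fun p => isOpen_iInter_of_finite fun q =>
      isOpen_lt ((continuous_entry p q).sub continuous_const).abs continuous_const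
  have h1W : (1 : SLR n) ∈ W := fun p q => by simpa [Matrix.one_apply] using hε
  apply Set.Subset.antisymm
  · intro z hz
    obtain ⟨t, g, hgW, hgz⟩ := hdense z hz _ (isOpenMap_orbit y W hW) ⟨y, hy, 1, h1W, one_smul _ y⟩
    simp only at hgz
    have hg : g ∈ posDiag n := by
      refine ⟨H g hgW (hgz ▸ hinv t z hz), fun p => ?_⟩
      have := (abs_lt.1 (hgW p p)).1
      rw [if_pos rfl] at this
      linarith
    obtain ⟨s, -, rfl⟩ := exists_expD hg
    refine ⟨expD (-t + s), expD_mem _, ?_⟩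
    simp only
    rw [expD_add, mul_smul, hgz, expD_neg_smul_smul]
  · rintro _ ⟨g, hg, rfl⟩
    obtain ⟨t, -, rfl⟩ := exists_expD hg
    exact hinv _ _ hy

end CompactOrbit

/-- If `Y` is a compact `A`-minimal subset of `X = SL_n(ℝ)/SL_n(ℤ)` (`n ≥ 3`) such that
for every root `α` every `A_α`-minimal subset `Y_α ⊆ Y` satisfies `A•Y_α = Y`, then
`Y` is a single compact `A`-orbit. -/
theorem statement_5 (n : ℕ) (hn : 3 ≤ n)
    (Y : Set (SLR n ⧸ GammaZ n)) (hYc : IsCompact Y) (hYmin : IsMinimalOn (posDiag n) Y)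
    (h : ∀ (i j : Fin n), i ≠ j → ∀ Yα ⊆ Y, IsCompact Yα →
      IsMinimalOn (rootKer n i j) Yα → posDiag n • Yα = Y) :
    ∃ x : SLR n ⧸ GammaZ n, Y = (· • x) '' posDiag n := by
  open CompactOrbit in
  obtain ⟨⟨y, hy⟩, hYinv, hYdense⟩ := hYmin
  have hinv : ∀ t : Fin n → ℝ, ∀ z ∈ Y, expD t • z ∈ Y := fun t z hz => by
    have h1 := hYinv _ (expD_mem t)
    exact h1 ▸ ⟨z, hz, rfl⟩
  have hdense : ∀ z ∈ Y, ∀ O : Set (Quo n), IsOpen O → (Y ∩ O).Nonempty →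
      ∃ t : Fin n → ℝ, expD t • z ∈ O := by
    rintro z hz O hO ⟨x, hxY, hxO⟩
    obtain ⟨_, hxO, g, hg, rfl⟩ := mem_closure_iff.1 (hYdense z hz hxY) O hO hxO
    obtain ⟨t, -, rfl⟩ := exists_expD hg
    exact ⟨t, hxO⟩
  have hcov : ∀ (i j : Fin n), i ≠ j → ∀ M ⊆ Y, Mini i j M →
      ∀ y ∈ Y, ∃ t : Fin n → ℝ, y ∈ expD t • M := by
    intro i j hij M hMY hM y hy
    rw [← h i j hij M hMY (hYc.of_isClosed_subset hM.closed hMY) hM.isMinimalOn] at hy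
    obtain ⟨g, hg, z, hz, rfl⟩ := hy
    obtain ⟨t, -, rfl⟩ := exists_expD hg
    exact ⟨t, z, hz, rfl⟩
  -- No displacement inside `Y` is horospherical.
  have key : ∀ w : Fin n → ℝ, Function.Injective w → ∃ ε > 0, ∀ g : SLR n,
      (∀ p q, |g.1 p q - if p = q then 1 else 0| < ε) → g • y ∈ Y →
      ∀ p q, w p < w q → g.1 p q = 0 := by
    intro w hw
    by_contra! hcon
    obtain ⟨h₁, z, hz, hhz, hdiag, hlow, hne⟩ := exists_horospherical hYc hinv hw hy hcon
    obtain ⟨i, j, hij, s, z', hs, hz', hsz'⟩ := exists_root hYc hinv hw hz hhz hdiag hlow hne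
    exact hs (unip_trivial hij hYc hinv hdense (hcov i j hij) hz' hsz')
  have hinj : Function.Injective fun p : Fin n => ((p : ℕ) : ℝ) :=
    Nat.cast_injective.comp Fin.val_injective
  -- Two opposite chambers together see every off-diagonal entry.
  obtain ⟨ε₁, hε₁, h₁⟩ := key (fun p => ((p : ℕ) : ℝ)) hinj
  obtain ⟨ε₂, hε₂, h₂⟩ := key (fun p => -((p : ℕ) : ℝ)) (neg_injective.comp hinj)
  refine ⟨y, eq_orbit hinv hdense hy (ε := min 1 (min ε₁ ε₂)) (by positivity) (min_le_left _ _) ?_⟩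
  intro g hg hgy p q hpq
  rcases lt_or_gt_of_ne hpq with hlt | hlt
  · exact h₁ g (fun p q => (hg p q).trans_le ((min_le_right _ _).trans (min_le_left _ _))) hgy p q
      (by simpa using hlt)
  · exact h₂ g (fun p q => (hg p q).trans_le ((min_le_right _ _).trans (min_le_right _ _))) hgy p q
      (by simpa using hlt)
end

section
/- Let n ≥ 2 and let R ⊆ SL_n(ℝ) be a closed subset invariant under conjugation by every element of A, and suppose that for every pair i ≠ j, R ∩ {I + s·E_{ij} : s ∈ ℝ} ⊆ {I}. Then there exists a neighborhood Ω of the identity in SL_n(ℝ) such that every element of R ∩ Ω is a diagonal matrix. -/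
/-!
Conjugation by `diag (exp t)` multiplies the `(i, j)` entry by `exp (t i - t j)` and fixes the
diagonal. If elements of `R` with a nonzero entry above the diagonal accumulate at `1`, expand the
entries above the diagonal (contracting those below) until the largest one has absolute value `1`
(`exists_normalized`). By compactness and closedness, `R` then contains a nontrivial upper
unitriangular matrix (`upper_vanish`). A further conjugation contracts all of its off-diagonal
entries except one, which is kept fixed, so that `R` contains some `1 + s E_{ij}` with `s ≠ 0`
(`unipotent_trivial`), contrary to the hypothesis. Entries below the diagonal are treated in the
same way with the order of the indices reversed; to cover both cases at once, the order is given by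
an injective function `v` to `ℝ`, and "above the diagonal" means `v l < v k` for the position
`(k, l)`.
-/

open Matrix MeasureTheory Pointwise

open Filter Topology in
/-- A unipotent element of `S`, triangular for the order given by `v`, is trivial. Otherwise let
`j` be the `v`-highest column with a nonzero off-diagonal entry, say `U i j ≠ 0`. Indices above `j`
then only occur as rows, so there are exponents `t` with `t i = t j` and `t k < t l` for every other
off-diagonal position `(k, l)` of the support; conjugating by `exp (s t)` and letting `s → ∞` kills
all off-diagonal entries except `(i, j)`. -/
lemma unipotent_trivial {ι : Type*} [Fintype ι] [DecidableEq ι] {S : Set (Matrix ι ι ℝ)}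
    (hc : IsClosed S)
    (hconj : ∀ M ∈ S, ∀ t : ι → ℝ, Matrix.of (fun i j => Real.exp (t i - t j) * M i j) ∈ S)
    (hU : ∀ i j, i ≠ j → ∀ s : ℝ, Matrix.transvection i j s ∈ S → s = 0)
    {v : ι → ℝ} (hv : Function.Injective v) {U : Matrix ι ι ℝ} (hUS : U ∈ S)
    (hdiag : ∀ k, U k k = 1) (hlow : ∀ k l, v k < v l → U k l = 0)
    (k l : ι) (hkl : k ≠ l) : U k l = 0 := by
  classical
  by_contra hne
  let C : Finset ι := Finset.univ.filter fun j => ∃ i, i ≠ j ∧ U i j ≠ 0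
  obtain ⟨j, hjC, hjmax⟩ := C.exists_max_image v 
    ⟨l, Finset.mem_filter.2 ⟨Finset.mem_univ _, k, hkl, hne⟩⟩
  obtain ⟨i, hij, hUij⟩ := (Finset.mem_filter.1 hjC).2
  have hcol : ∀ k l, k ≠ l → U k l ≠ 0 → v l ≤ v j := fun k l h h' =>
    hjmax l (Finset.mem_filter.2 ⟨Finset.mem_univ _, k, h, h'⟩)
  have hup : ∀ k l, k ≠ l → U k l ≠ 0 → v l < v k := fun k l h h' =>
    lt_of_le_of_ne (not_lt.1 fun hlt => h' (hlow k l hlt)) fun e => h (hv e.symm)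
  let t : ι → ℝ := fun k => if k = i then 0 else if v j < v k then -1 else v j - v k
  have hti : t i = 0 := by simp [t]
  have htj : t j = 0 := by simp [t]
  have ht : ∀ k l, k ≠ l → U k l ≠ 0 → ¬ (k = i ∧ l = j) → t k < t l := by
    intro k l h h' hn
    have h1 := hcol k l h h'
    have h2 := hup k l h h'
    have h3 := hup i j hij hUij
    have hli : l ≠ i := by rintro rfl; linarith
    have htl : t l = v j - v l := by simp [t, hli, not_lt.2 h1]
    rw [htl]
    by_cases hlj : l = j
    · subst hlj
      have hki : k ≠ i := fun e => hn ⟨e, rfl⟩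
      simp [t, hki, h2]
    · have : v l < v j := lt_of_le_of_ne h1 fun e => hlj (hv e)
      simp only [t]
      split_ifs <;> linarith
  have hlim : Tendsto (fun s : ℝ => Matrix.of (fun k l => Real.exp (s * t k - s * t l) * U k l))
      atTop (𝓝 (Matrix.transvection i j (U i j))) := by
    refine tendsto_pi_nhds.2 fun k => tendsto_pi_nhds.2 fun l => ?_
    simp only [Matrix.of_apply, Matrix.transvection, Matrix.add_apply, Matrix.single_apply,
      Matrix.one_apply]
    by_cases h : k = l
    · subst h
      have : ¬ (i = k ∧ j = k) := fun e => hij (e.1.trans e.2.symm)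
      simp [hdiag, this]
    by_cases h0 : U k l = 0
    · have : ¬ (i = k ∧ j = l) := by rintro ⟨rfl, rfl⟩; exact hUij h0
      simp [h0, h, this]
    by_cases hp : k = i ∧ l = j
    · obtain ⟨rfl, rfl⟩ := hp
      simp [hti, htj, h]
    · have h1 : ¬ (i = k ∧ j = l) := fun e => hp ⟨e.1.symm, e.2.symm⟩
      have h2 := ht k l h h0 hp
      simp only [h, h1, if_false, add_zero]
      have h3 : Tendsto (fun s : ℝ => s * t k - s * t l) atTop atBot := by
        have := (tendsto_id (α := ℝ) (x := atTop)).atTop_mul_const_of_neg (sub_neg.2 h2)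
        refine this.congr fun s => ?_
        simp only [id]; ring
      simpa using (Real.tendsto_exp_atBot.comp h3).mul_const (U k l)
  exact hUij (hU i j hij _ (hc.mem_of_tendsto hlim
    (Eventually.of_forall fun s => hconj U hUS fun k => s * t k)))

/-- Rescaling: an element of `S` that is `ε`-close to `1` and has a nonzero entry strictly above
the diagonal (in the order given by `v`) is conjugate to one whose largest such entry has absolute
value exactly `1`, without moving the diagonal or enlarging the entries below it. -/
lemma exists_normalized {ι : Type*} [Fintype ι] [DecidableEq ι] {S : Set (Matrix ι ι ℝ)}
    (hconj : ∀ M ∈ S, ∀ t : ι → ℝ, Matrix.of (fun i j => Real.exp (t i - t j) * M i j) ∈ S)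
    {v : ι → ℝ} {ε : ℝ} (hε : ε ≤ 1) {M : Matrix ι ι ℝ} (hM : M ∈ S)
    (hclose : ∀ k l, |M k l - (1 : Matrix ι ι ℝ) k l| ≤ ε)
    (hne : ∃ k l, v l < v k ∧ M k l ≠ 0) :
    ∃ N ∈ S, (∀ k, |N k k - 1| ≤ ε) ∧ (∀ k l, v k < v l → |N k l| ≤ ε) ∧
      (∀ k l, v l < v k → |N k l| ≤ 1) ∧ ∃ k l, v l < v k ∧ |N k l| = 1 := by
  classical
  have hoff : ∀ k l, k ≠ l → |M k l| ≤ ε := fun k l h => by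
    simpa [Matrix.one_apply_ne h] using hclose k l
  let P : Finset (ι × ι) := Finset.univ.filter fun p => v p.2 < v p.1 ∧ M p.1 p.2 ≠ 0
  obtain ⟨k₀, l₀, h₀⟩ := hne
  -- `s` is the time at which the first entry above the diagonal reaches absolute value `1`.
  obtain ⟨p, hpP, hpmin⟩ := P.exists_min_image
    (fun p => -Real.log |M p.1 p.2| / (v p.1 - v p.2))
    ⟨(k₀, l₀), by simpa [P] using h₀⟩
  obtain ⟨hp1, hp2⟩ : v p.2 < v p.1 ∧ M p.1 p.2 ≠ 0 := by simpa [P] using hpP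
  set s : ℝ := -Real.log |M p.1 p.2| / (v p.1 - v p.2) with hs
  have hs0 : 0 ≤ s := by
    refine div_nonneg (neg_nonneg.2 (Real.log_nonpos (abs_nonneg _) ?_)) (by linarith)
    exact (hoff _ _ (fun e => by rw [e] at hp1; exact lt_irrefl _ hp1)).trans hε
  have key : ∀ k l, M k l ≠ 0 → Real.exp (s * v k - s * v l) * |M k l|
      = Real.exp (s * (v k - v l) + Real.log |M k l|) := fun k l h => by
    rw [Real.exp_add, Real.exp_log (abs_pos.2 h), mul_sub]
  refine ⟨_, hconj M hM fun k => s * v k, fun k => ?_, fun k l h => ?_, fun k l h => ?_,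
    p.1, p.2, hp1, ?_⟩
  · simpa using hclose k k
  · rw [Matrix.of_apply, abs_mul, Real.abs_exp]
    have h1 : Real.exp (s * v k - s * v l) ≤ 1 := Real.exp_le_one_iff.2 (by nlinarith)
    have h2 := hoff k l (fun e => by rw [e] at h; exact lt_irrefl _ h)
    nlinarith [abs_nonneg (M k l)]
  · rw [Matrix.of_apply, abs_mul, Real.abs_exp]
    by_cases h0 : M k l = 0
    · simp [h0]
    · rw [key k l h0, Real.exp_le_one_iff]
      have := hpmin (k, l) (by simp [P, h, h0])
      change s ≤ _ at this
      rw [le_div_iff₀ (sub_pos.2 h)] at this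
      simp only at this
      linarith
  · rw [Matrix.of_apply, abs_mul, Real.abs_exp, key _ _ hp2, Real.exp_eq_one_iff, hs,
      div_mul_cancel₀ _ (by linarith)]
    ring

open Filter Topology in
/-- Elements of `S` close to `1` have no nonzero entry strictly above the diagonal, in the order
given by `v`: a sequence of counterexamples, normalized by `exists_normalized`, would accumulate at
a nontrivial unipotent triangular element of `S`. -/
lemma upper_vanish {ι : Type*} [Fintype ι] [DecidableEq ι] {S : Set (Matrix ι ι ℝ)}
    (hc : IsClosed S)
    (hconj : ∀ M ∈ S, ∀ t : ι → ℝ, Matrix.of (fun i j => Real.exp (t i - t j) * M i j) ∈ S)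
    (hU : ∀ i j, i ≠ j → ∀ s : ℝ, Matrix.transvection i j s ∈ S → s = 0)
    {v : ι → ℝ} (hv : Function.Injective v) :
    ∃ ε > 0, ∀ M ∈ S, (∀ k l, |M k l - (1 : Matrix ι ι ℝ) k l| ≤ ε) →
      ∀ k l, v l < v k → M k l = 0 := by
  by_contra! hcon
  let e : ℕ → ℝ := fun m => 1 / ((m : ℝ) + 1)
  have he0 : ∀ m, 0 < e m := fun m => Nat.one_div_pos_of_nat
  have he1 : ∀ m, e m ≤ 1 := fun m => by
    have : (0 : ℝ) ≤ m := Nat.cast_nonneg m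
    exact (div_le_one (by linarith)).2 (by linarith)
  have hN : ∀ m : ℕ, ∃ N ∈ S, (∀ k, |N k k - 1| ≤ e m) ∧ (∀ k l, v k < v l → |N k l| ≤ e m) ∧
      (∀ k l, v l < v k → |N k l| ≤ 1) ∧ ∃ k l, v l < v k ∧ |N k l| = 1 := fun m => by
    obtain ⟨M, hM, hcl, hne⟩ := hcon (e m) (he0 m)
    exact exists_normalized hconj (he1 m) hM hcl hne
  choose N hNS hNd hNl hNu hNe using hN
  have hbd : ∀ m, (N m : ι → ι → ℝ) ∈ Set.Icc (fun _ _ => (-2 : ℝ)) (fun _ _ => (2 : ℝ)) := by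
    intro m
    have : ∀ k l, |N m k l| ≤ 2 := fun k l => by
      rcases lt_trichotomy (v k) (v l) with h | h | h
      · linarith [hNl m k l h, he1 m]
      · obtain rfl := hv h
        have h1 := abs_le.1 (hNd m k)
        have h2 := he1 m
        exact abs_le.2 ⟨by linarith, by linarith⟩
      · linarith [hNu m k l h]
    exact ⟨fun k l => (abs_le.1 (this k l)).1, fun k l => (abs_le.1 (this k l)).2⟩
  obtain ⟨U, -, φ, hφ, hlim⟩ :=
    IsCompact.tendsto_subseq (X := ι → ι → ℝ) isCompact_Icc hbd
  have hent : ∀ k l, Tendsto (fun m => N (φ m) k l) atTop (𝓝 (U k l)) := fun k l =>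
    tendsto_pi_nhds.1 (tendsto_pi_nhds.1 hlim k) l
  have heφ : Tendsto (fun m => e (φ m)) atTop (𝓝 0) :=
    tendsto_one_div_add_atTop_nhds_zero_nat.comp hφ.tendsto_atTop
  have hUS : (U : Matrix ι ι ℝ) ∈ S :=
    IsClosed.mem_of_tendsto (X := Matrix ι ι ℝ) hc hlim (Eventually.of_forall fun m => hNS (φ m))
  have hd : ∀ k, U k k = 1 := fun k => by
    refine tendsto_nhds_unique (hent k k) (tendsto_sub_nhds_zero_iff.1 ?_)
    exact squeeze_zero_norm (fun m => hNd (φ m) k) heφ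
  have hl : ∀ k l, v k < v l → U k l = 0 := fun k l h =>
    tendsto_nhds_unique (hent k l) (squeeze_zero_norm (fun m => hNl (φ m) k l h) heφ)
  have htriv := unipotent_trivial hc hconj hU hv hUS hd hl
  -- All entries of `N (φ m)` above the diagonal tend to `0`, but one of them has modulus `1`.
  have hsmall : ∀ᶠ m in atTop, ∀ k l, v l < v k → |N (φ m) k l| < 1 := by
    refine eventually_all.2 fun k => eventually_all.2 fun l => ?_
    by_cases h : v l < v k
    · have h1 := (hent k l).abs
      rw [htriv k l (fun e => by rw [e] at h; exact lt_irrefl _ h), abs_zero] at h1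
      exact (h1.eventually (gt_mem_nhds one_pos)).mono fun m hm _ => hm
    · exact Eventually.of_forall fun m h' => absurd h' h
  obtain ⟨m, hm⟩ := hsmall.exists
  obtain ⟨k, l, hlk, hone⟩ := hNe (φ m)
  exact (hm k l hlk).ne hone

/-- Conjugation by `A`, in exponential coordinates: the exponents `t` may be arbitrary, since
subtracting their mean achieves determinant `1` without changing the conjugation action. -/
lemma conj_exp_mem {n : ℕ} {R : Set (SLR n)}
    (hconj : ∀ a ∈ posDiag n, ∀ r ∈ R, a * r * a⁻¹ ∈ R) {r : SLR n} (hr : r ∈ R)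
    (t : Fin n → ℝ) :
    ∃ r' ∈ R, r'.1 = Matrix.of (fun i j => Real.exp (t i - t j) * r.1 i j) := by
  rcases Nat.eq_zero_or_pos n with rfl | hn
  · exact ⟨r, hr, by ext i; exact i.elim0⟩
  let c : ℝ := (∑ i, t i) / n
  have hsum : ∑ i, (t i - c) = 0 := by
    have : (n : ℝ) ≠ 0 := by positivity
    simp only [Finset.sum_sub_distrib, Finset.sum_const, Finset.card_univ, Fintype.card_fin,
      nsmul_eq_mul, c]
    field_simp
    ring
  let a : SLR n := ⟨Matrix.diagonal fun i => Real.exp (t i - c), by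
    rw [Matrix.det_diagonal, ← Real.exp_sum, hsum, Real.exp_zero]⟩
  have ha : a ∈ posDiag n :=
    ⟨fun i j h => Matrix.diagonal_apply_ne _ h, fun i => by simp [a, Real.exp_pos]⟩
  let r₁ : SLR n := a * r * a⁻¹
  refine ⟨r₁, hconj a ha r hr, ?_⟩
  have h1 : r₁.1 * a.1 = a.1 * r.1 := by
    have : r₁ * a = a * r := by simp [r₁]
    simpa using congrArg Subtype.val this
  ext i j
  have h2 := congrFun (congrFun h1 i) j
  simp only [a, Matrix.mul_diagonal, Matrix.diagonal_mul] at h2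
  rw [Matrix.of_apply, ← mul_right_cancel_iff_of_pos (Real.exp_pos (t j - c)), h2,
    mul_right_comm, ← Real.exp_add]
  congr 2
  ring

/-- If `R ⊆ SL_n(ℝ)` is closed, invariant under conjugation by `A`, and meets each
one-parameter root subgroup `{I + s E_{ij}}` only (possibly) in the identity, then all
elements of `R` in some neighborhood of the identity are diagonal. -/
theorem statement_7 (n : ℕ) (hn : 2 ≤ n) (R : Set (SLR n)) (hRc : IsClosed R)
    (hconj : ∀ a ∈ posDiag n, ∀ r ∈ R, a * r * a⁻¹ ∈ R)
    (hU : ∀ (i j : Fin n) (hij : i ≠ j),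
      R ∩ {u : SLR n | ∃ s : ℝ, u = elemU n hij s} ⊆ {1}) :
    ∃ Ω ∈ nhds (1 : SLR n), ∀ r ∈ R ∩ Ω, ∀ i j, i ≠ j → r.1 i j = 0 := by
  classical
  let S : Set (Matrix (Fin n) (Fin n) ℝ) := Subtype.val '' R
  have hcl : IsClosed {M : Matrix (Fin n) (Fin n) ℝ | M.det = 1} :=
    isClosed_eq (continuous_id.matrix_det) continuous_const
  have hc : IsClosed S := hcl.isClosedEmbedding_subtypeVal.isClosedMap R hRc
  have hS : ∀ M ∈ S, ∀ t : Fin n → ℝ,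
      Matrix.of (fun i j => Real.exp (t i - t j) * M i j) ∈ S := by
    rintro _ ⟨r, hr, rfl⟩ t
    exact conj_exp_mem hconj hr t
  have hT : ∀ i j, i ≠ j → ∀ s : ℝ, Matrix.transvection i j s ∈ S → s = 0 := by
    rintro i j hij s ⟨r, hr, hrs⟩
    have h1 : r = (1 : SLR n) := hU i j hij ⟨hr, s, Subtype.ext hrs⟩
    have h3 : r.1 i j = 0 := by
      rw [h1]
      exact Matrix.one_apply_ne hij
    have h2 := congrFun (congrFun hrs i) j
    rw [h3] at h2
    simpa [Matrix.transvection, hij] using h2.symm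
  have hv : Function.Injective fun i : Fin n => ((i : ℕ) : ℝ) :=
    Nat.cast_injective.comp Fin.val_injective
  obtain ⟨ε₁, hε₁, H₁⟩ := upper_vanish hc hS hT hv
  obtain ⟨ε₂, hε₂, H₂⟩ := upper_vanish hc hS hT (neg_injective.comp hv)
  refine ⟨{r : SLR n | ∀ k l, |r.1 k l - (1 : Matrix (Fin n) (Fin n) ℝ) k l| < min ε₁ ε₂},
    ?_, ?_⟩
  · refine Filter.eventually_all.2 fun k => Filter.eventually_all.2 fun l => ?_
    have hcont : Continuous fun r : SLR n =>
        |r.1 k l - (1 : Matrix (Fin n) (Fin n) ℝ) k l| := by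
      have : Continuous fun r : SLR n => r.1 := continuous_subtype_val
      exact ((this.matrix_elem k l).sub continuous_const).abs
    refine hcont.continuousAt.eventually (gt_mem_nhds ?_)
    simpa using ⟨hε₁, hε₂⟩
  · rintro r ⟨hr, hΩ⟩ i j hij
    rcases lt_or_gt_of_ne (hv.ne hij) with h | h
    · exact H₂ r.1 ⟨r, hr, rfl⟩ (fun k l => (hΩ k l).le.trans (min_le_right _ _)) i j
        (neg_lt_neg h)
    · exact H₁ r.1 ⟨r, hr, rfl⟩ (fun k l => (hΩ k l).le.trans (min_le_left _ _)) i j h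
end

section
/- Let Y ⊆ X be a compact A-minimal subset, α a root, and Y_α ⊆ Y an A_α-minimal subset such that A·Y_α = Y. Then the stabilizer Stab_A(Y_α) = {a ∈ A : a·Y_α = Y_α} is a cocompact closed subgroup of A; that is, the quotient A/Stab_A(Y_α) is compact. -/
/-!
Only three features of the situation matter: `A` is a closed, `σ`-compact abelian subgroup, the
space `G ⧸ Γ` is Hausdorff, and `A_α ⊆ A`.

Since `A` commutes with `A_α`, each translate `a • Y_α` is again closed and `A_α`-minimal, so it
equals `Y_α` as soon as it meets it at `a • y`, `y ∈ Y_α` (`image_eq_iff_smul_mem`). Hence, for a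
fixed `y ∈ Y_α`, the stabilizer is `{a ∈ A | a • y ∈ Y_α}`, which is closed.

Write `A = ⋃ m, K m` with `K m` compact. Then `Y = ⋃ m, K m • Y_α`, and by Baire's theorem some
`K m • Y_α` has nonempty interior in the compact Hausdorff space `Y`. By `A`-minimality the
translates of that interior cover `Y`, and finitely many of them suffice, so `Y = K • Y_α` for
some compact `K ⊆ A` (`exists_compact_smul_cover`). Now for `a ∈ A` and `y ∈ Y_α`
there are `k ∈ K` and `y' ∈ Y_α` with `a • y = k • y'`; thus `(k⁻¹ * a) • y ∈ Y_α`, so `k⁻¹ * a`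
lies in the stabilizer and `a = k * (k⁻¹ * a)`.
-/

open Matrix MeasureTheory Pointwise

section Abstract

variable {G X : Type*} [Group G] [TopologicalSpace X] [MulAction G X]

theorem image_subset_of_smul_mem [ContinuousConstSMul G X] {B : Set G} {Z : Set X}
    (hZc : IsClosed Z) (hZ : IsMinimalOn B Z) {a : G} (hcomm : ∀ b ∈ B, a * b = b * a) {z : X}
    (hz : z ∈ Z) (haz : a • z ∈ Z) : (a • ·) '' Z ⊆ Z := by
  obtain ⟨-, hinv, hdense⟩ := hZ
  have h1 : Set.MapsTo (a • ·) (closure ((· • z) '' B)) Z := by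
    refine Set.MapsTo.closure_left ?_ (continuous_const_smul a) hZc
    rintro _ ⟨b, hb, rfl⟩
    change a • b • z ∈ Z
    rw [smul_smul, hcomm b hb, ← smul_smul, ← hinv b hb]
    exact Set.mem_image_of_mem _ haz
  rintro _ ⟨w, hw, rfl⟩
  exact h1 (hdense z hz hw)

/-- An element commuting with `B` stabilizes a closed `B`-minimal set as soon as it keeps one of
its points inside it. -/
theorem image_eq_iff_smul_mem [ContinuousConstSMul G X] {B : Set G} {Z : Set X}
    (hZc : IsClosed Z) (hZ : IsMinimalOn B Z) {a : G} (hcomm : ∀ b ∈ B, a * b = b * a) {z : X}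
    (hz : z ∈ Z) : (a • ·) '' Z = Z ↔ a • z ∈ Z := by
  refine ⟨fun h => h ▸ Set.mem_image_of_mem _ hz, fun haz => ?_⟩
  refine (image_subset_of_smul_mem hZc hZ hcomm hz haz).antisymm fun w hw => ?_
  have hcomm' : ∀ b ∈ B, a⁻¹ * b = b * a⁻¹ := fun b hb =>
    ((show Commute a b from hcomm b hb).inv_left).eq
  refine ⟨a⁻¹ • w, ?_, smul_inv_smul a w⟩
  exact image_subset_of_smul_mem hZc hZ hcomm' haz (by simpa using hz) (Set.mem_image_of_mem _ hw)

/-- If a compact `A`-minimal set `Y` is `A • Z` with `Z` compact and `A` `σ`-compact, then already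
a compact part of `A` moves `Z` over all of `Y`. -/
theorem exists_compact_smul_cover [TopologicalSpace G] [IsTopologicalGroup G] [ContinuousSMul G X]
    [T2Space X] {A : Set G} (hA : IsSigmaCompact A) (hmul : ∀ a ∈ A, ∀ b ∈ A, a * b ∈ A)
    (hinv : ∀ a ∈ A, a⁻¹ ∈ A) {Y Z : Set X} (hY : IsCompact Y) (hYmin : IsMinimalOn A Y)
    (hZ : IsCompact Z) (hAZ : A • Z = Y) :
    ∃ K : Set G, IsCompact K ∧ K ⊆ A ∧ Y ⊆ K • Z := by
  obtain ⟨K, hK, hKA⟩ := hA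
  obtain ⟨hne, hYinv, hdense⟩ := hYmin
  have : CompactSpace Y := isCompact_iff_compactSpace.mp hY
  have : Nonempty Y := hne.to_subtype
  obtain ⟨m, x, hx⟩ := nonempty_interior_of_iUnion_of_closed
    (f := fun m => ((↑) : Y → X) ⁻¹' (K m • Z))
    (fun m => ((hK m).smul_set hZ).isClosed.preimage continuous_subtype_val) (by
      rw [← Set.preimage_iUnion, ← Set.iUnion_smul, hKA, hAZ, Subtype.coe_preimage_self])
  obtain ⟨V, hV, hVo, hxV⟩ := mem_interior.mp hx
  obtain ⟨U, hU, rfl⟩ := isOpen_induced_iff.mp hVo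
  obtain ⟨t, ht⟩ := hY.elim_finite_subcover (fun a : A => ((a : G) • ·) ⁻¹' U)
    (fun a => hU.preimage (continuous_const_smul (a : G))) (by
      intro y hy
      obtain ⟨_, hu, a, ha, rfl⟩ := mem_closure_iff.mp (hdense y hy x.2) U hU hxV
      exact Set.mem_iUnion.mpr ⟨⟨a, ha⟩, hu⟩)
  refine ⟨⋃ a ∈ t, (a : G)⁻¹ • K m, t.isCompact_biUnion fun a _ => (hK m).smul _, ?_, ?_⟩
  · simp only [Set.iUnion_subset_iff]
    rintro a - _ ⟨k, hk, rfl⟩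
    exact hmul _ (hinv _ a.2) _ (hKA ▸ Set.mem_iUnion.mpr ⟨m, hk⟩)
  · intro y hy
    obtain ⟨a, hat, hay⟩ := Set.mem_iUnion₂.mp (ht hy)
    have hayY : (a : G) • y ∈ Y := hYinv a a.2 ▸ Set.mem_image_of_mem _ hy
    obtain ⟨k, hk, z, hz, hkz⟩ := hV (show (⟨_, hayY⟩ : Y) ∈ _ from hay)
    refine ⟨(a : G)⁻¹ * k, Set.mem_iUnion₂.mpr ⟨a, hat, Set.smul_mem_smul_set hk⟩, z, hz, ?_⟩
    change ((a : G)⁻¹ * k) • z = y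
    rw [mul_smul, inv_smul_eq_iff]
    exact hkz

end Abstract

section PosDiag

variable {n : ℕ}

theorem posDiag_mul_apply {a : SLR n} (ha : a ∈ posDiag n) (b : SLR n) (k l : Fin n) :
    (a * b).1 k l = a.1 k k * b.1 k l := by
  rw [Matrix.SpecialLinearGroup.coe_mul, Matrix.mul_apply]
  exact Finset.sum_eq_single k (fun r _ hr => by rw [ha.1 k r hr.symm, zero_mul]) (by simp)

theorem posDiag_mul_mem {a b : SLR n} (ha : a ∈ posDiag n) (hb : b ∈ posDiag n) :
    a * b ∈ posDiag n :=
  ⟨fun k l h => by rw [posDiag_mul_apply ha, hb.1 k l h, mul_zero],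
    fun k => by rw [posDiag_mul_apply ha]; exact mul_pos (ha.2 k) (hb.2 k)⟩

theorem posDiag_inv_mem {a : SLR n} (ha : a ∈ posDiag n) : a⁻¹ ∈ posDiag n := by
  have h : ∀ k l, a.1 k k * (a⁻¹).1 k l = (1 : Matrix (Fin n) (Fin n) ℝ) k l := fun k l => by
    rw [← posDiag_mul_apply ha, mul_inv_cancel]; rfl
  refine ⟨fun k l hkl => ?_, fun k => ?_⟩
  · have := h k l
    rw [Matrix.one_apply_ne hkl] at this
    exact (mul_eq_zero.mp this).resolve_left (ha.2 k).ne'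
  · have := h k k
    rw [Matrix.one_apply_eq] at this
    exact (pos_iff_pos_of_mul_pos (by rw [this]; exact one_pos)).mp (ha.2 k)

theorem posDiag_comm_s8 {a b : SLR n} (ha : a ∈ posDiag n) (hb : b ∈ posDiag n) :
    a * b = b * a := by
  apply Subtype.ext
  ext k l
  rw [posDiag_mul_apply ha, posDiag_mul_apply hb]
  by_cases h : k = l
  · rw [h, mul_comm]
  · rw [ha.1 k l h, hb.1 k l h, mul_zero, mul_zero]

theorem continuous_entry (k l : Fin n) : Continuous fun g : SLR n => g.1 k l :=
  (continuous_subtype_val (p := fun M : Matrix (Fin n) (Fin n) ℝ => M.det = 1)).matrix_elem k l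

theorem isClosed_posDiag : IsClosed (posDiag n) := by
  -- A diagonal entry of a diagonal matrix of determinant `1` is nonzero, so the open condition
  -- `0 < a k k` may be replaced by the closed condition `0 ≤ a k k`.
  have h : posDiag n = {g : SLR n | (∀ i j, i ≠ j → g.1 i j = 0) ∧ ∀ i, 0 ≤ g.1 i i} := by
    ext g
    refine ⟨fun hg => ⟨hg.1, fun i => (hg.2 i).le⟩, fun hg => ⟨hg.1, fun i => ?_⟩⟩
    refine (hg.2 i).lt_of_ne fun h0 => ?_
    have hdet : g.1.det = 1 := g.2
    rw [Matrix.det_eq_zero_of_row_eq_zero i] at hdet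
    · exact zero_ne_one hdet
    · intro j
      by_cases hij : i = j
      · rw [← hij, ← h0]
      · exact hg.1 i j hij
  rw [h]
  simp only [Set.ofPred_and, Set.ofPred_forall]
  refine IsClosed.inter ?_ ?_
  · exact isClosed_iInter fun i => isClosed_iInter fun j => isClosed_iInter fun _ =>
      isClosed_eq (continuous_entry i j) continuous_const
  · exact isClosed_iInter fun i => isClosed_le continuous_const (continuous_entry i i)

theorem sigmaCompactSpace_SLR : SigmaCompactSpace (SLR n) := by
  have : SigmaCompactSpace (Matrix (Fin n) (Fin n) ℝ) :=
    inferInstanceAs (SigmaCompactSpace (Fin n → Fin n → ℝ))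
  have hc : IsClosed {M : Matrix (Fin n) (Fin n) ℝ | M.det = 1} :=
    isClosed_eq continuous_id.matrix_det continuous_const
  exact hc.isClosedEmbedding_subtypeVal.sigmaCompactSpace

end PosDiag

/-- Let `Γ` be a lattice in `G = SL_n(ℝ)`, `Y` a compact `A`-minimal set, `α` a root, and
`Y_α ⊆ Y` an `A_α`-minimal subset with `A•Y_α = Y`. Then `Stab_A(Y_α)` is a closed
subgroup of `A` which is cocompact in `A`: there is a compact `K ⊆ A` with
`A = K • Stab_A(Y_α)`. -/
theorem statement_8 (n : ℕ) (hn : 2 ≤ n) (Γ : Subgroup (SLR n)) (hΓ : IsLattice Γ)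
    (i j : Fin n) (hij : i ≠ j)
    (Y : Set (SLR n ⧸ Γ)) (hYc : IsCompact Y) (hYmin : IsMinimalOn (posDiag n) Y)
    (Yα : Set (SLR n ⧸ Γ)) (hsub : Yα ⊆ Y) (hYαc : IsCompact Yα)
    (hYαmin : IsMinimalOn (rootKer n i j) Yα) (hAY : posDiag n • Yα = Y) :
    IsClosed {a : SLR n | a ∈ posDiag n ∧ (a • ·) '' Yα = Yα} ∧
    ∃ K : Set (SLR n), IsCompact K ∧ K ⊆ posDiag n ∧
      ∀ a ∈ posDiag n, ∃ k ∈ K,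
        ∃ s ∈ {a : SLR n | a ∈ posDiag n ∧ (a • ·) '' Yα = Yα}, a = k * s := by
  have hT : IsTopologicalGroup (SLR n) := Matrix.SpecialLinearGroup.topologicalGroup
  have hT2 : T2Space (SLR n) :=
    inferInstanceAs (T2Space {A : Matrix (Fin n) (Fin n) ℝ // A.det = 1})
  have := hΓ.1
  have hΓc : IsClosed (Γ : Set (SLR n)) := Subgroup.isClosed_of_discrete
  have : T2Space (SLR n ⧸ Γ) := inferInstance
  have := sigmaCompactSpace_SLR (n := n)
  have hA : IsSigmaCompact (posDiag n) := isSigmaCompact_univ.of_isClosed_subset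
    isClosed_posDiag (Set.subset_univ _)
  obtain ⟨y, hy⟩ := hYαmin.1
  have hstab : ∀ a ∈ posDiag n, ((a • ·) '' Yα = Yα ↔ a • y ∈ Yα) := fun a ha =>
    image_eq_iff_smul_mem hYαc.isClosed hYαmin (fun b hb => posDiag_comm_s8 ha hb.1) hy
  constructor
  · have h : {a : SLR n | a ∈ posDiag n ∧ (a • ·) '' Yα = Yα} =
        posDiag n ∩ (fun a : SLR n => a • y) ⁻¹' Yα :=
      Set.ext fun a => and_congr_right (hstab a)
    rw [h]
    exact isClosed_posDiag.inter (hYαc.isClosed.preimage (continuous_id.smul continuous_const))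
  · obtain ⟨K, hK, hKA, hcov⟩ := exists_compact_smul_cover hA (fun a ha b hb => posDiag_mul_mem ha hb)
      (fun a ha => posDiag_inv_mem ha) hYc hYmin hYαc hAY
    refine ⟨K, hK, hKA, fun a ha => ?_⟩
    obtain ⟨k, hk, z, hz, hkz⟩ := hcov (hAY ▸ Set.smul_mem_smul ha hy : a • y ∈ Y)
    have hmem : k⁻¹ * a ∈ posDiag n := posDiag_mul_mem (posDiag_inv_mem (hKA hk)) ha
    refine ⟨k, hk, k⁻¹ * a, ⟨hmem, (hstab _ hmem).mpr ?_⟩, (mul_inv_cancel_left k a).symm⟩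
    have hkz' : k • z = a • y := hkz
    rw [mul_smul, ← hkz', inv_smul_smul]
    exact hz
end
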